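/- arXiv:2010.01467 — 3 statements merged into one kernel-verified Lean document; each statement's English description precedes it below -/
import Mathlib

section
/- Let λ, b ∈ X₀([0,T₀]×D_{R₀}) with |b(t,x)| ≤ B·m(t) on [0,T₀]×D_{R₀} for a weight function m and B > 0, set φ(t) = ∫₀^t m(τ)/τ dτ, choose 0 < T < T₀ and 0 < R < R₁ < R₀ with R + B·φ(T) < R₁ and R₁ + B·φ(T) < R₀, let φ(t;t₀,x₀) denote the unique solution of dx/dt = −b(t,x)/t with x(t₀) = x₀, and set 𝒟 = ∪_{x₀∈D_{R₁}} {(t, φ(t;T,x₀)) : 0 < t ≤ T}. Then for every g ∈ X₀(𝒟) and every holomorphic ψ on D_{R₁}, the Cauchy problem t·∂w/∂t − λ(t,x)·w − b(t,x)·∂w/∂x = g(t,x), w(T,x) = ψ(x), has a unique solution w ∈ X₁(𝒟), given by w(t,x) = ψ(φ(T;t,x))·exp[−∫_t^T λ(s,φ(s;t,x))/s ds] − ∫_t^T exp[−∫_t^τ λ(s,φ(s;t,x))/s ds]·g(τ,φ(τ;t,x))/τ dτ. -/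
open Set Filter MeasureTheory Metric Topology Complex

noncomputable section

/-- A *weight function* on `(0, T₀]`: increasing, continuous and positive on `(0,T₀]`,
with `∫₀^{T₀} m(τ)/τ dτ < ∞`. -/
def IsWeight (T₀ : ℝ) (m : ℝ → ℝ) : Prop :=
  MonotoneOn m (Set.Ioc 0 T₀) ∧ ContinuousOn m (Set.Ioc 0 T₀) ∧
    (∀ t ∈ Set.Ioc (0 : ℝ) T₀, 0 < m t) ∧
    MeasureTheory.IntegrableOn (fun τ => m τ / τ) (Set.Ioc 0 T₀)

/-- `φ(t) = ∫₀ᵗ m(τ)/τ dτ`. -/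
def wphi (m : ℝ → ℝ) (t : ℝ) : ℝ := ∫ τ in Set.Ioc (0 : ℝ) t, m τ / τ

/-- `f ∈ X₀(S × D_R)` : continuous on `S × D_R`, holomorphic in `x` for each fixed `t`. -/
def MemX0 (S : Set ℝ) (R : ℝ) (f : ℝ → ℂ → ℂ) : Prop :=
  ContinuousOn (fun p : ℝ × ℂ => f p.1 p.2) (S ×ˢ Metric.ball (0 : ℂ) R) ∧
    ∀ t ∈ S, DifferentiableOn ℂ (f t) (Metric.ball (0 : ℂ) R)

/-- `f ∈ X₁(S × D_R)` : `f ∈ X₀`, with a `t`-derivative for `t > 0` such that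
`t ∂f/∂t ∈ X₀`. -/
def MemX1 (S : Set ℝ) (R : ℝ) (f : ℝ → ℂ → ℂ) : Prop :=
  MemX0 S R f ∧
    ∃ g : ℝ → ℂ → ℂ, MemX0 S R g ∧
      ∀ t ∈ S, 0 < t → ∀ x ∈ Metric.ball (0 : ℂ) R,
        HasDerivWithinAt (fun s => f s x) (g t x / (t : ℂ)) S t

/-- `u` solves equation (E) :
`t ∂u/∂t = a + λ u + b ∂u/∂x + Σ_{j+α≥2} a_{j,α} u^j (∂u/∂x)^α` on `(0,T] × D_R`. -/
def SolvesE (T R : ℝ) (a lam b : ℝ → ℂ → ℂ) (c : ℕ → ℕ → ℝ → ℂ → ℂ)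
    (u : ℝ → ℂ → ℂ) : Prop :=
  ∀ t ∈ Set.Ioc (0 : ℝ) T, ∀ x ∈ Metric.ball (0 : ℂ) R,
    HasDerivWithinAt (fun s => u s x)
      ((a t x + lam t x * u t x + b t x * deriv (u t) x +
          ∑' p : ℕ × ℕ, c p.1 p.2 t x * u t x ^ p.1 * deriv (u t) x ^ p.2) / (t : ℂ))
      (Set.Ioc 0 T) t

/-- `u` is a germ (near the origin) solution of equation (E). -/
def GermSol (T₀ R₀ : ℝ) (a lam b : ℝ → ℂ → ℂ) (c : ℕ → ℕ → ℝ → ℂ → ℂ)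
    (u : ℝ → ℂ → ℂ) : Prop :=
  ∃ T, 0 < T ∧ T ≤ T₀ ∧ ∃ R, 0 < R ∧ R ≤ R₀ ∧ SolvesE T R a lam b c u

/-- the germ class `X₁^d`. -/
def MemX1d (d : ℝ) (u : ℝ → ℂ → ℂ) : Prop :=
  ∃ T > (0 : ℝ), ∃ R > (0 : ℝ), MemX1 (Set.Icc 0 T) R u ∧
    ∃ C > (0 : ℝ), ∀ t ∈ Set.Icc (0 : ℝ) T, ∀ x ∈ Metric.ball (0 : ℂ) R,
      max ‖u t x‖ ‖deriv (u t) x‖ ≤ C * t ^ d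

/-- the germ class `X₁⁺ = ⋃_{d>0} X₁^d`. -/
def MemX1plus (u : ℝ → ℂ → ℂ) : Prop := ∃ d > (0 : ℝ), MemX1d d u

/-- the germ class `X₁^{(μ)} = ⋂_{0<a<μ} X₁^a`. -/
def MemX1lt (μ : ℝ) (u : ℝ → ℂ → ℂ) : Prop := ∀ a : ℝ, 0 < a → a < μ → MemX1d a u

/-- two functions agree as germs on some `(0,ε] × D_δ`. -/
def GermEqPos (u v : ℝ → ℂ → ℂ) : Prop :=
  ∃ ε > (0 : ℝ), ∃ δ > (0 : ℝ), ∀ t ∈ Set.Ioc (0 : ℝ) ε, ∀ x ∈ Metric.ball (0 : ℂ) δ,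
    u t x = v t x

/-- the class `𝒳₁` (built on `X₁([0,T]×D_R)`) : the limsup-condition
`limsup_{ρ→0⁺} [ lim_{σ→0⁺} (1/ρ²) sup_{(0,σ)×D_ρ} |u| ] = 0`. -/
def MemXscrIcc (u : ℝ → ℂ → ℂ) : Prop :=
  (∃ T > (0 : ℝ), ∃ R > (0 : ℝ), MemX1 (Set.Icc 0 T) R u) ∧
    ∀ ε > (0 : ℝ), ∃ ρ₁ > (0 : ℝ), ∀ ρ, 0 < ρ → ρ < ρ₁ →
      ∃ σ > (0 : ℝ), ∀ t, 0 < t → t < σ → ∀ x ∈ Metric.ball (0 : ℂ) ρ,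
        ‖u t x‖ ≤ ε * ρ ^ 2

/-- the class `𝒳₁` (built on `X₁((0,T]×D_R)`). -/
def MemXscrIoc (u : ℝ → ℂ → ℂ) : Prop :=
  (∃ T > (0 : ℝ), ∃ R > (0 : ℝ), MemX1 (Set.Ioc 0 T) R u) ∧
    ∀ ε > (0 : ℝ), ∃ ρ₁ > (0 : ℝ), ∀ ρ, 0 < ρ → ρ < ρ₁ →
      ∃ σ > (0 : ℝ), ∀ t, 0 < t → t < σ → ∀ x ∈ Metric.ball (0 : ℂ) ρ,
        ‖u t x‖ ≤ ε * ρ ^ 2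

/-- `ψ` is holomorphic in a neighborhood of `x = 0`. -/
def HoloGerm (ψ : ℂ → ℂ) : Prop :=
  ∃ r > (0 : ℝ), DifferentiableOn ℂ ψ (Metric.ball (0 : ℂ) r)

/-- `t^{-λ(0,x)} w(t,x) → ψ(x)` as `t → 0⁺`, uniformly near `x = 0`,
where `t^{-λ(0,x)} = exp(-λ(0,x) log t)`. -/
def BndLimit (lam0 : ℂ → ℂ) (w : ℝ → ℂ → ℂ) (ψ : ℂ → ℂ) : Prop :=
  ∃ δ > (0 : ℝ), TendstoUniformlyOn
    (fun t x => Complex.exp (-(lam0 x) * (Real.log t : ℂ)) * w t x) ψ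
    (nhdsWithin 0 (Set.Ioi 0)) (Metric.ball (0 : ℂ) δ)

/-- `lim_{t→0⁺} sup_{x ∈ D_R} |t^{-d} u(t,x)| = 0`. -/
def SmalloOnBall (d R : ℝ) (u : ℝ → ℂ → ℂ) : Prop :=
  ∀ ε > (0 : ℝ), ∃ τ > (0 : ℝ), ∀ t, 0 < t → t < τ → ∀ x ∈ Metric.ball (0 : ℂ) R,
    ‖u t x‖ ≤ ε * t ^ d

/-- `f ∈ X₀(W)` for a general domain `W ⊆ ℝ × ℂ`. -/
def MemX0W (W : Set (ℝ × ℂ)) (f : ℝ → ℂ → ℂ) : Prop :=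
  ContinuousOn (fun p : ℝ × ℂ => f p.1 p.2) W ∧
    ∀ t : ℝ, DifferentiableOn ℂ (f t) {y : ℂ | (t, y) ∈ W}

/-- `f ∈ X₁(W)` for a general domain `W ⊆ ℝ × ℂ`. -/
def MemX1W (W : Set (ℝ × ℂ)) (f : ℝ → ℂ → ℂ) : Prop :=
  MemX0W W f ∧
    ∃ g : ℝ → ℂ → ℂ, MemX0W W g ∧
      ∀ t x, (t, x) ∈ W → 0 < t →
        HasDerivWithinAt (fun s => f s x) (g t x / (t : ℂ)) {s : ℝ | (s, x) ∈ W} t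

/-- `w` solves `t ∂w/∂t = λ w + b ∂w/∂x + g` on the domain `W`. -/
def SolvesLW (W : Set (ℝ × ℂ)) (lam b g w : ℝ → ℂ → ℂ) : Prop :=
  ∀ t x, (t, x) ∈ W → 0 < t →
    HasDerivWithinAt (fun s => w s x)
      ((lam t x * w t x + b t x * deriv (w t) x + g t x) / (t : ℂ))
      {s : ℝ | (s, x) ∈ W} t

/-- `v` solves the homogeneous linear equation `t ∂v/∂t = λ v + b ∂v/∂x`
on the product domain `S × D_R`. -/
def SolvesLin (S : Set ℝ) (R : ℝ) (lam b : ℝ → ℂ → ℂ) (v : ℝ → ℂ → ℂ) : Prop :=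
  ∀ t ∈ S, 0 < t → ∀ x ∈ Metric.ball (0 : ℂ) R,
    HasDerivWithinAt (fun s => v s x)
      ((lam t x * v t x + b t x * deriv (v t) x) / (t : ℂ)) S t

/-- the characteristic domain `𝒟 = ⋃_{x₀ ∈ D_{R₁}} {(t, φ(t;T,x₀)) : 0 < t ≤ T}`. -/
def Dchar (T R₁ : ℝ) (Φ : ℝ → ℝ → ℂ → ℂ) : Set (ℝ × ℂ) :=
  {p : ℝ × ℂ | p.1 ∈ Set.Ioc (0 : ℝ) T ∧ ∃ x₀ ∈ Metric.ball (0 : ℂ) R₁, p.2 = Φ p.1 T x₀}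

/-- the domain `W = {(t,x) ∈ [0,T] × D_R : φ(t)/r + |x| < R}`. -/
def Wset (m : ℝ → ℝ) (T R r : ℝ) : Set (ℝ × ℂ) :=
  {p : ℝ × ℂ | p.1 ∈ Set.Icc (0 : ℝ) T ∧ p.2 ∈ Metric.ball (0 : ℂ) R ∧
    wphi m p.1 / r + ‖p.2‖ < R}

/-- `D` is relatively open in `(0,T] × ℂ`. -/
def RelOpen (T : ℝ) (D : Set (ℝ × ℂ)) : Prop :=
  ∀ p ∈ D, p.1 ∈ Ioc (0:ℝ) T ∧ ∃ r > 0, ∀ᶠ t in 𝓝[Ioc 0 T] p.1, ∀ y ∈ ball p.2 r, (t, y) ∈ D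

lemma relOpen_prod (T R : ℝ) : RelOpen T (Ioc (0:ℝ) T ×ˢ ball (0:ℂ) R) := by
  rintro ⟨t, x⟩ ⟨ht, hx⟩
  refine ⟨ht, ?_⟩
  obtain ⟨r, hr, h⟩ := Metric.isOpen_iff.1 isOpen_ball x hx
  refine ⟨r, hr, ?_⟩
  filter_upwards [self_mem_nhdsWithin] with s hs y hy
  exact ⟨hs, h hy⟩

lemma MemX0.toW {T R : ℝ} {f : ℝ → ℂ → ℂ} (h : MemX0 (Ioc 0 T) R f) :
    MemX0W (Ioc (0:ℝ) T ×ˢ ball (0:ℂ) R) f := by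
  refine ⟨h.1, fun t => ?_⟩
  by_cases ht : t ∈ Ioc (0:ℝ) T
  · exact (h.2 t ht).mono fun y hy => hy.2
  · intro y hy
    exact absurd hy.1 ht

lemma RelOpen.isOpen_slice {T : ℝ} {D : Set (ℝ × ℂ)} (hD : RelOpen T D) (t : ℝ) :
    IsOpen {y : ℂ | (t, y) ∈ D} := by
  rw [Metric.isOpen_iff]
  intro y hy
  obtain ⟨h1, r, hr, h2⟩ := hD _ hy
  exact ⟨r, hr, fun z hz => h2.self_of_nhdsWithin h1 z hz⟩

lemma RelOpen.mem_prod {T : ℝ} {D : Set (ℝ × ℂ)} (hD : RelOpen T D) {t : ℝ} {x : ℂ}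
    (hp : (t, x) ∈ D) : D ∈ 𝓝[Ioc 0 T] t ×ˢ 𝓝 x := by
  obtain ⟨h1, r, hr, h2⟩ := hD _ hp
  filter_upwards [prod_mem_prod h2 (ball_mem_nhds x hr)] with q hq
  exact hq.1 q.2 hq.2

lemma RelOpen.tendsto {T : ℝ} {D : Set (ℝ × ℂ)} (hD : RelOpen T D) {t : ℝ} {x : ℂ}
    (hp : (t, x) ∈ D) {f : ℝ × ℂ → ℂ} (hf : ContinuousOn f D) :
    Tendsto f (𝓝[Ioc 0 T] t ×ˢ 𝓝 x) (𝓝 (f (t, x))) := by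
  refine (hf _ hp).mono_left ?_
  refine le_inf ?_ (le_principal_iff.2 (hD.mem_prod hp))
  rw [nhds_prod_eq]
  exact Filter.prod_mono nhdsWithin_le_nhds le_rfl

lemma RelOpen.continuousOn {T : ℝ} {D : Set (ℝ × ℂ)} (hD : RelOpen T D) {f : ℝ × ℂ → ℂ}
    (h : ∀ t x, (t, x) ∈ D → Tendsto f (𝓝[Ioc 0 T] t ×ˢ 𝓝 x) (𝓝 (f (t, x)))) :
    ContinuousOn f D := by
  rintro ⟨t, x⟩ hp
  refine (h t x hp).mono_left ?_
  rw [← nhdsWithin_univ x, ← nhdsWithin_prod_eq]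
  exact nhdsWithin_mono _ fun q hq => ⟨(hD q hq).1, trivial⟩

lemma tendsto_deriv {T : ℝ} {D : Set (ℝ × ℂ)} (hD : RelOpen T D) {f : ℝ → ℂ → ℂ}
    (hf : MemX0W D f) {t : ℝ} {x : ℂ} (hp : (t, x) ∈ D) :
    Tendsto (fun q : ℝ × ℂ => deriv (f q.1) q.2) (𝓝[Ioc 0 T] t ×ˢ 𝓝 x)
      (𝓝 (deriv (f t) x)) := by
  obtain ⟨h1, r, hr, h2⟩ := hD _ hp
  have hdiff : ∀ᶠ s in 𝓝[Ioc 0 T] t, DifferentiableOn ℂ (f s) (ball x r) := by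
    filter_upwards [h2] with s hs
    exact (hf.2 s).mono hs
  have hdt : DifferentiableOn ℂ (f t) (ball x r) := hdiff.self_of_nhdsWithin h1
  have hlu : TendstoLocallyUniformlyOn f (f t) (𝓝[Ioc 0 T] t) (ball x r) := by
    rw [isOpen_ball.tendstoLocallyUniformlyOn_iff_forall_tendsto]
    intro y hy
    have hyD : (t, y) ∈ D := h2.self_of_nhdsWithin h1 y hy
    have a1 : Tendsto (fun q : ℝ × ℂ => f q.1 q.2) (𝓝[Ioc 0 T] t ×ˢ 𝓝 y) (𝓝 (f t y)) :=
      hD.tendsto hyD hf.1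
    have a2 : Tendsto (fun q : ℝ × ℂ => f t q.2) (𝓝[Ioc 0 T] t ×ˢ 𝓝 y) (𝓝 (f t y)) :=
      ((hdt.continuousOn.continuousAt (isOpen_ball.mem_nhds hy)).tendsto).comp tendsto_snd
    exact (a2.prodMk_nhds a1).mono_right (nhds_le_uniformity _)
  have hld := hlu.deriv hdiff isOpen_ball
  rw [isOpen_ball.tendstoLocallyUniformlyOn_iff_forall_tendsto] at hld
  have b1 := hld x (mem_ball_self hr)
  have b2 : Tendsto (fun q : ℝ × ℂ => deriv (f t) q.2) (𝓝[Ioc 0 T] t ×ˢ 𝓝 x)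
      (𝓝 (deriv (f t) x)) :=
    (((hdt.deriv isOpen_ball).continuousOn.continuousAt
      (ball_mem_nhds x hr)).tendsto).comp tendsto_snd
  exact b2.congr_uniformity b1

lemma continuousOn_deriv {T : ℝ} {D : Set (ℝ × ℂ)} (hD : RelOpen T D) {f : ℝ → ℂ → ℂ}
    (hf : MemX0W D f) : ContinuousOn (fun q : ℝ × ℂ => deriv (f q.1) q.2) D :=
  hD.continuousOn fun _ _ hp => tendsto_deriv hD hf hp

lemma strict_bound {T : ℝ} {D : Set (ℝ × ℂ)} (hD : RelOpen T D) {f : ℝ → ℂ → ℂ}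
    (hf : MemX0W D f) {t : ℝ} {x : ℂ} (hp : (t, x) ∈ D) {ε : ℝ} (hε : 0 < ε) :
    ∃ δ > 0, ∀ᶠ s in 𝓝[Ioc 0 T] t, ∀ u ∈ ball x δ, ∀ v ∈ ball x δ,
      ‖f s u - f s v - deriv (f t) x * (u - v)‖ ≤ ε * ‖u - v‖ := by
  have h1 := (tendsto_deriv hD hf hp).eventually (Metric.ball_mem_nhds _ hε)
  have h2 := h1.and (hD.mem_prod hp)
  obtain ⟨A, hA, B, hB, hAB⟩ := mem_prod_iff.1 h2
  obtain ⟨δ, hδ, hδB⟩ := Metric.mem_nhds_iff.1 hB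
  refine ⟨δ, hδ, ?_⟩
  filter_upwards [hA] with s hs u hu v hv
  have hder : ∀ y ∈ ball x δ, HasDerivWithinAt (fun y => f s y - deriv (f t) x * y)
      (deriv (f s) y - deriv (f t) x) (ball x δ) y := by
    intro y hy
    have : (s, y) ∈ D := (hAB (mk_mem_prod hs (hδB hy))).2
    have hd : DifferentiableAt ℂ (f s) y :=
      (hf.2 s).differentiableAt ((hD.isOpen_slice s).mem_nhds this)
    have := (hd.hasDerivAt.fun_sub ((hasDerivAt_id' y).const_mul (deriv (f t) x))).hasDerivWithinAt
      (s := ball x δ)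
    rwa [mul_one] at this
  have := Convex.norm_image_sub_le_of_norm_hasDerivWithin_le (C := ε) hder (fun y hy => by
    have := (hAB (mk_mem_prod hs (hδB hy))).1
    rw [← dist_eq_norm]
    exact (mem_ball.1 this).le) (convex_ball x δ) hv hu
  have e : f s u - f s v - deriv (f t) x * (u - v)
      = (f s u - deriv (f t) x * u) - (f s v - deriv (f t) x * v) := by ring
  rw [e]
  exact this

lemma chain_sub {T : ℝ} {D : Set (ℝ × ℂ)} (hD : RelOpen T D) {f : ℝ → ℂ → ℂ}
    (hf : MemX0W D f) {t : ℝ} {x : ℂ} (hp : (t, x) ∈ D) {c₁ c₂ : ℝ → ℂ} {d₁ d₂ : ℂ}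
    (h1 : c₁ t = x) (h2 : c₂ t = x)
    (hd1 : HasDerivWithinAt c₁ d₁ (Ioc 0 T) t) (hd2 : HasDerivWithinAt c₂ d₂ (Ioc 0 T) t) :
    HasDerivWithinAt (fun s => f s (c₁ s) - f s (c₂ s)) (deriv (f t) x * (d₁ - d₂))
      (Ioc 0 T) t := by
  have hd := (hd1.sub hd2).const_mul (deriv (f t) x)
  have key : (fun s => f s (c₁ s) - f s (c₂ s) - deriv (f t) x * (c₁ s - c₂ s))
      =o[𝓝[Ioc 0 T] t] fun s => (s - t) := by
    have hO : (fun s => c₁ s - c₂ s) =O[𝓝[Ioc 0 T] t] fun s => (s - t) := by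
      have := (hd1.sub hd2).isBigO_sub
      rw [Filter.prod_pure, Asymptotics.isBigO_map] at this
      exact this.congr (fun s => by simp [h1, h2]) (fun s => rfl)
    refine Asymptotics.IsLittleO.trans_isBigO ?_ hO
    rw [Asymptotics.isLittleO_iff]
    intro ε hε
    obtain ⟨δ, hδ, hev⟩ := strict_bound hD hf hp hε
    have e1 := hd1.continuousWithinAt.tendsto
    have e2 := hd2.continuousWithinAt.tendsto
    rw [h1] at e1
    rw [h2] at e2
    filter_upwards [hev, e1.eventually (ball_mem_nhds x hδ), e2.eventually (ball_mem_nhds x hδ)]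
      with s hs a1 a2
    exact hs _ a1 _ a2
  rw [hasDerivWithinAt_iff_isLittleO] at hd ⊢
  refine (key.add hd).congr_left fun s => ?_
  simp [h1, h2]

lemma uIcc_sub {T t s : ℝ} (ht : t ∈ Ioc (0:ℝ) T) (hs : s ∈ Ioc (0:ℝ) T) :
    uIcc t s ⊆ Ioc 0 T := by
  intro u hu
  rw [mem_uIcc] at hu
  rcases hu with hu | hu
  · exact ⟨ht.1.trans_le hu.1, hu.2.trans hs.2⟩
  · exact ⟨hs.1.trans_le hu.1, hu.2.trans ht.2⟩

lemma uIoc_sub {T t s : ℝ} (ht : t ∈ Ioc (0:ℝ) T) (hs : s ∈ Ioc (0:ℝ) T) :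
    uIoc t s ⊆ Ioc 0 T := uIoc_subset_uIcc.trans (uIcc_sub ht hs)

lemma intInt {T t s : ℝ} (ht : t ∈ Ioc (0:ℝ) T) (hs : s ∈ Ioc (0:ℝ) T) {a : ℝ → ℂ}
    (ha : ContinuousOn a (Ioc 0 T)) : IntervalIntegrable a volume t s :=
  (ha.mono (uIcc_sub ht hs)).intervalIntegrable

lemma int_deriv {T t : ℝ} (ht : t ∈ Ioc (0:ℝ) T) {a : ℝ → ℂ} (ha : ContinuousOn a (Ioc 0 T)) :
    HasDerivWithinAt (fun u => ∫ s in u..T, a s) (-(a t)) (Ioc 0 T) t := by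
  have hTT : T ∈ Ioc (0:ℝ) T := ⟨ht.1.trans_le ht.2, le_rfl⟩
  have hc : ContinuousOn (fun s => a (min s T)) (Ioi 0) := by
    refine ha.comp (by fun_prop) fun s hs => ⟨lt_min hs hTT.1, min_le_right _ _⟩
  have hcon : ContinuousAt (fun s => a (min s T)) t := hc.continuousAt (Ioi_mem_nhds ht.1)
  have hint : IntervalIntegrable (fun s => a (min s T)) volume t T :=
    (hc.mono ((uIcc_sub ht hTT).trans fun s hs => hs.1)).intervalIntegrable
  have h := intervalIntegral.integral_hasDerivAt_left hint
    (hc.stronglyMeasurableAtFilter isOpen_Ioi t ht.1) hcon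
  have h2 := h.hasDerivWithinAt (s := Ioc 0 T)
  simp only [min_eq_left ht.2] at h2
  refine h2.congr_of_mem (fun u hu => ?_) ht
  refine intervalIntegral.integral_congr fun s hs => ?_
  simp only [min_eq_left (uIcc_sub hu hTT hs).2]

lemma const_Ioc {T t : ℝ} (ht : t ∈ Ioc (0:ℝ) T) {z : ℝ → ℂ}
    (hz : ∀ s ∈ Ioc (0:ℝ) T, HasDerivWithinAt z 0 (Ioc 0 T) s) : z t = z T := by
  have hTT : T ∈ Ioc (0:ℝ) T := ⟨ht.1.trans_le ht.2, le_rfl⟩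
  have := Convex.norm_image_sub_le_of_norm_hasDerivWithin_le (C := 0) hz (fun _ _ => by simp)
    (convex_Ioc 0 T) hTT ht
  rw [zero_mul, norm_le_zero_iff, sub_eq_zero] at this
  exact this

lemma lin_sol {T t : ℝ} (ht : t ∈ Ioc (0:ℝ) T) {a z : ℝ → ℂ} (ha : ContinuousOn a (Ioc 0 T))
    (hz : ∀ s ∈ Ioc (0:ℝ) T, HasDerivWithinAt z (a s * z s) (Ioc 0 T) s) :
    z t = z T * Complex.exp (-∫ s in t..T, a s) := by
  have h := const_Ioc ht (z := fun s => z s * Complex.exp (∫ u in s..T, a u)) fun s hs => by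
    exact ((hz s hs).fun_mul (int_deriv hs ha).cexp).congr_deriv (by ring)
  simp only [intervalIntegral.integral_same, Complex.exp_zero, mul_one] at h
  rw [← h, mul_assoc, ← Complex.exp_add]
  simp

lemma bound_compact {T R ε : ℝ} (hε : 0 < ε) {f : ℝ × ℂ → ℂ}
    (hf : ContinuousOn f (Ioc (0:ℝ) T ×ˢ ball (0:ℂ) R)) {K : Set ℂ} (hK : IsCompact K)
    (hKR : K ⊆ ball 0 R) : ∃ M, 0 ≤ M ∧ ∀ s ∈ Icc ε T, ∀ y ∈ K, ‖f (s, y)‖ ≤ M := by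
  obtain ⟨M, hM⟩ := (isCompact_Icc (a := ε) (b := T)).prod hK |>.exists_bound_of_continuousOn
    (hf.mono (prod_mono (fun s hs => ⟨hε.trans_le hs.1, hs.2⟩) hKR))
  exact ⟨max M 0, le_max_right _ _, fun s hs y hy => (hM (s, y) ⟨hs, hy⟩).trans (le_max_left _ _)⟩

lemma MemX0.cont_t {T R : ℝ} {h : ℝ → ℂ → ℂ} (hh : MemX0 (Ioc 0 T) R h) {y : ℂ}
    (hy : y ∈ ball (0:ℂ) R) : ContinuousOn (fun s => h s y) (Ioc 0 T) :=
  hh.1.comp (f := fun s : ℝ => (s, y)) (by fun_prop) fun s hs => ⟨hs, hy⟩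

lemma memX0_integral {T R : ℝ} (hT : 0 < T) {h : ℝ → ℂ → ℂ} (hh : MemX0 (Ioc 0 T) R h) :
    MemX0 (Ioc 0 T) R (fun t y => ∫ s in t..T, h s y) := by
  have hTT : T ∈ Ioc (0:ℝ) T := ⟨hT, le_rfl⟩
  have hdc := continuousOn_deriv (relOpen_prod T R) hh.toW
  have hdiff : ∀ t ∈ Ioc (0:ℝ) T,
      DifferentiableOn ℂ (fun y => ∫ s in t..T, h s y) (ball (0:ℂ) R) := by
    intro t ht y hy
    obtain ⟨r, hr, hrR⟩ := Metric.nhds_basis_closedBall.mem_iff.1 (isOpen_ball.mem_nhds hy)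
    obtain ⟨M, hM0, hM⟩ := bound_compact (ε := t) ht.1 hdc (isCompact_closedBall y r) hrR
    have key := intervalIntegral.hasDerivAt_integral_of_dominated_loc_of_deriv_le
      (μ := volume) (a := t) (b := T) (F := fun y s => h s y) (F' := fun y s => deriv (h s) y)
      (x₀ := y) (s := closedBall y r) (bound := fun _ => M)
      (closedBall_mem_nhds y hr) ?_ (intInt ht hTT (hh.cont_t hy)) ?_ ?_ (by simp) ?_
    · exact key.2.differentiableAt.differentiableWithinAt
    · filter_upwards [closedBall_mem_nhds y hr] with z hz
      exact ((hh.cont_t (hrR hz)).mono (uIoc_sub ht hTT)).aestronglyMeasurable measurableSet_uIoc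
    · refine ContinuousOn.aestronglyMeasurable (ContinuousOn.mono ?_ (uIoc_sub ht hTT))
        measurableSet_uIoc
      exact hdc.comp (f := fun s : ℝ => (s, y)) (by fun_prop) fun s hs => ⟨hs, hy⟩
    · refine ae_of_all _ fun s hs z hz => hM s ?_ z hz
      rw [uIoc_of_le ht.2] at hs
      exact ⟨hs.1.le, hs.2⟩
    · refine ae_of_all _ fun s hs z hz => ?_
      exact ((hh.2 s (uIoc_sub ht hTT hs)).differentiableAt
        (isOpen_ball.mem_nhds (hrR hz))).hasDerivAt
  refine ⟨?_, hdiff⟩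
  refine (relOpen_prod T R).continuousOn ?_
  rintro t y ⟨ht, hy⟩
  dsimp only at ht hy ⊢
  obtain ⟨r, hr, hrR⟩ := Metric.nhds_basis_closedBall.mem_iff.1 (isOpen_ball.mem_nhds hy)
  have ht2 : 0 < t / 2 := by linarith [ht.1]
  obtain ⟨M, hM0, hM⟩ := bound_compact (ε := t / 2) ht2 hh.1 (isCompact_closedBall y r) hrR
  have e1 : Tendsto (fun q : ℝ × ℂ => ∫ s in t..T, h s q.2) (𝓝[Ioc 0 T] t ×ˢ 𝓝 y)
      (𝓝 (∫ s in t..T, h s y)) :=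
    (((hdiff t ht).continuousOn.continuousAt (isOpen_ball.mem_nhds hy)).tendsto).comp tendsto_snd
  have e2 : Tendsto (fun q : ℝ × ℂ => ∫ s in q.1..t, h s q.2) (𝓝[Ioc 0 T] t ×ˢ 𝓝 y)
      (𝓝 0) := by
    have hz : Tendsto (fun q : ℝ × ℂ => M * |t - q.1|) (𝓝[Ioc 0 T] t ×ˢ 𝓝 y) (𝓝 0) := by
      have : Tendsto (fun s : ℝ => M * |t - s|) (𝓝[Ioc 0 T] t) (𝓝 (M * |t - t|)) :=
        Continuous.continuousWithinAt (by fun_prop)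
      simp only [sub_self, abs_zero, mul_zero] at this
      exact this.comp tendsto_fst
    refine squeeze_zero_norm' ?_ hz
    have n1 : Ioi (t / 2) ∩ Ioc 0 T ∈ 𝓝[Ioc 0 T] t :=
      inter_mem (mem_nhdsWithin_of_mem_nhds (Ioi_mem_nhds (by linarith [ht.1])))
        self_mem_nhdsWithin
    filter_upwards [prod_mem_prod n1 (closedBall_mem_nhds y hr)] with q hq
    refine intervalIntegral.norm_integral_le_of_norm_le_const fun s hs => ?_
    refine hM s ⟨?_, (uIoc_sub hq.1.2 ht hs).2⟩ q.2 hq.2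
    rcases mem_uIoc.1 hs with hs | hs
    · exact (lt_trans hq.1.1 hs.1).le
    · linarith [hs.1, ht.1]
  have e3 := e1.add e2
  rw [add_zero] at e3
  refine e3.congr' ?_
  filter_upwards [prod_mem_prod self_mem_nhdsWithin (isOpen_ball.mem_nhds hy)] with q hq
  rw [add_comm]
  exact intervalIntegral.integral_add_adjacent_intervals (intInt hq.1 ht (hh.cont_t hq.2))
    (intInt ht hTT (hh.cont_t hq.2))

/-- The characteristic flow started at time `T`. -/
structure CharFlow (T R₁ R₀ r₂ : ℝ) (β F : ℝ → ℂ → ℂ) : Prop where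
  hT : 0 < T
  hr : r₂ < R₀
  hβ : MemX0 (Ioc 0 T) R₀ β
  hFT : ∀ x ∈ ball (0:ℂ) R₁, F T x = x
  hFK : ∀ x ∈ ball (0:ℂ) R₁, ∀ t ∈ Ioc (0:ℝ) T, F t x ∈ closedBall (0:ℂ) r₂
  hF : ∀ x ∈ ball (0:ℂ) R₁, ∀ t ∈ Ioc (0:ℝ) T, HasDerivAt (fun s => F s x) (β t (F t x)) t

namespace CharFlow

variable {T R₁ R₀ r₂ : ℝ} {β F : ℝ → ℂ → ℂ}

lemma hTT (h : CharFlow T R₁ R₀ r₂ β F) : T ∈ Ioc (0:ℝ) T := ⟨h.hT, le_rfl⟩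

lemma sub (h : CharFlow T R₁ R₀ r₂ β F) : closedBall (0:ℂ) r₂ ⊆ ball 0 R₀ :=
  closedBall_subset_ball h.hr

lemma lip (h : CharFlow T R₁ R₀ r₂ β F) {ε : ℝ} (hε : 0 < ε) :
    ∃ L, 0 ≤ L ∧ ∀ t ∈ Icc ε T, ∀ u ∈ closedBall (0:ℂ) r₂, ∀ v ∈ closedBall (0:ℂ) r₂,
      ‖β t u - β t v‖ ≤ L * ‖u - v‖ := by
  obtain ⟨L, hL0, hL⟩ := bound_compact (ε := ε) hε
    (continuousOn_deriv (relOpen_prod T R₀) h.hβ.toW) (isCompact_closedBall 0 r₂) h.sub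
  refine ⟨L, hL0, fun t ht u hu v hv => ?_⟩
  refine Convex.norm_image_sub_le_of_norm_deriv_le (𝕜 := ℂ) (s := closedBall (0:ℂ) r₂)
    (fun y hy => ?_) (fun y hy => hL t ht y hy) (convex_closedBall _ _) hv hu
  exact (h.hβ.2 t ⟨hε.trans_le ht.1, ht.2⟩).differentiableAt (isOpen_ball.mem_nhds (h.sub hy))

lemma cont_t (h : CharFlow T R₁ R₀ r₂ β F) {x : ℂ} (hx : x ∈ ball (0:ℂ) R₁) :
    ContinuousOn (fun s => F s x) (Ioc 0 T) :=
  fun t ht => (h.hF x hx t ht).continuousAt.continuousWithinAt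

lemma cont_β (h : CharFlow T R₁ R₀ r₂ β F) {x : ℂ} (hx : x ∈ ball (0:ℂ) R₁) :
    ContinuousOn (fun s => β s (F s x)) (Ioc 0 T) :=
  h.hβ.1.comp (f := fun s : ℝ => (s, F s x)) (continuousOn_id.prodMk (h.cont_t hx))
    fun s hs => ⟨hs, h.sub (h.hFK x hx s hs)⟩

lemma inj (h : CharFlow T R₁ R₀ r₂ β F) {x y : ℂ} (hx : x ∈ ball (0:ℂ) R₁)
    (hy : y ∈ ball (0:ℂ) R₁) {t : ℝ} (ht : t ∈ Ioc (0:ℝ) T) (hxy : F t x = F t y) : x = y := by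
  obtain ⟨L, hL0, hL⟩ := h.lip ht.1
  have hsub : Icc t T ⊆ Ioc 0 T := fun s hs => ⟨ht.1.trans_le hs.1, hs.2⟩
  have := ODE_solution_unique_of_mem_Icc_right (v := β) (K := ⟨L, hL0⟩) (a := t) (b := T)
    (s := fun _ => closedBall (0:ℂ) r₂) (f := fun s => F s x) (g := fun s => F s y)
    (fun s hs => LipschitzOnWith.of_dist_le_mul fun u hu v hv => by
      rw [dist_eq_norm, dist_eq_norm]
      exact hL s ⟨hs.1, hs.2.le⟩ u hu v hv)
    ((h.cont_t hx).mono hsub)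
    (fun s hs => (h.hF x hx s (hsub ⟨hs.1, hs.2.le⟩)).hasDerivWithinAt)
    (fun s hs => h.hFK x hx s (hsub ⟨hs.1, hs.2.le⟩))
    ((h.cont_t hy).mono hsub)
    (fun s hs => (h.hF y hy s (hsub ⟨hs.1, hs.2.le⟩)).hasDerivWithinAt)
    (fun s hs => h.hFK y hy s (hsub ⟨hs.1, hs.2.le⟩))
    hxy
  have h2 := this (right_mem_Icc.2 ht.2)
  simpa only [h.hFT x hx, h.hFT y hy] using h2

lemma cont_quot (h : CharFlow T R₁ R₀ r₂ β F) {x y : ℂ} (hx : x ∈ ball (0:ℂ) R₁)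
    (hy : y ∈ ball (0:ℂ) R₁) (hne : y ≠ x) :
    ContinuousOn (fun s => (β s (F s y) - β s (F s x)) / (F s y - F s x)) (Ioc 0 T) :=
  ((h.cont_β hy).sub (h.cont_β hx)).div ((h.cont_t hy).sub (h.cont_t hx))
    fun s hs e => hne (h.inj hy hx hs (sub_eq_zero.1 e))

lemma formula (h : CharFlow T R₁ R₀ r₂ β F) {x y : ℂ} (hx : x ∈ ball (0:ℂ) R₁)
    (hy : y ∈ ball (0:ℂ) R₁) (hne : y ≠ x) {t : ℝ} (ht : t ∈ Ioc (0:ℝ) T) :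
    F t y - F t x = (y - x) *
      Complex.exp (-∫ s in t..T, (β s (F s y) - β s (F s x)) / (F s y - F s x)) := by
  have := lin_sol ht (z := fun s => F s y - F s x) (h.cont_quot hx hy hne) fun s hs => by
    refine (((h.hF y hy s hs).fun_sub (h.hF x hx s hs)).hasDerivWithinAt).congr_deriv ?_
    rw [div_mul_cancel₀]
    exact fun e => hne (h.inj hy hx hs (sub_eq_zero.1 e))
  simpa only [h.hFT x hx, h.hFT y hy] using this

lemma quot_le (h : CharFlow T R₁ R₀ r₂ β F) {ε : ℝ} (hε : 0 < ε) :
    ∃ L, 0 ≤ L ∧ ∀ x ∈ ball (0:ℂ) R₁, ∀ y ∈ ball (0:ℂ) R₁, ∀ s ∈ Icc ε T,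
      ‖(β s (F s y) - β s (F s x)) / (F s y - F s x)‖ ≤ L := by
  obtain ⟨L, hL0, hL⟩ := h.lip hε
  refine ⟨L, hL0, fun x hx y hy s hs => ?_⟩
  have hs' : s ∈ Ioc 0 T := ⟨hε.trans_le hs.1, hs.2⟩
  rw [norm_div]
  exact div_le_of_le_mul₀ (norm_nonneg _) hL0
    (hL s hs _ (h.hFK y hy s hs') _ (h.hFK x hx s hs'))

lemma bounds (h : CharFlow T R₁ R₀ r₂ β F) {ε : ℝ} (hε : 0 < ε) :
    ∃ M, 0 ≤ M ∧ ∀ x ∈ ball (0:ℂ) R₁, ∀ y ∈ ball (0:ℂ) R₁, ∀ t ∈ Icc ε T,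
      ‖F t y - F t x‖ ≤ Real.exp M * ‖y - x‖ ∧ Real.exp (-M) * ‖y - x‖ ≤ ‖F t y - F t x‖ := by
  obtain ⟨L, hL0, hL⟩ := h.quot_le hε
  refine ⟨L * T, mul_nonneg hL0 h.hT.le, fun x hx y hy t ht => ?_⟩
  have ht' : t ∈ Ioc 0 T := ⟨hε.trans_le ht.1, ht.2⟩
  rcases eq_or_ne y x with rfl | hne
  · simp
  rw [h.formula hx hy hne ht', norm_mul, Complex.norm_exp]
  have hI : ‖-∫ s in t..T, (β s (F s y) - β s (F s x)) / (F s y - F s x)‖ ≤ L * T := by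
    rw [norm_neg]
    refine (intervalIntegral.norm_integral_le_of_norm_le_const (C := L) fun s hs => ?_).trans ?_
    · rw [uIoc_of_le ht.2] at hs
      exact hL x hx y hy s ⟨ht.1.trans hs.1.le, hs.2⟩
    · rw [abs_of_nonneg (by linarith [ht.2])]
      exact mul_le_mul_of_nonneg_left (by linarith [ht'.1]) hL0
  have hre := (abs_le.1 ((Complex.abs_re_le_norm _).trans hI))
  constructor
  · rw [mul_comm]
    exact mul_le_mul_of_nonneg_right (Real.exp_le_exp.2 hre.2) (norm_nonneg _)
  · rw [mul_comm ‖y - x‖]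
    exact mul_le_mul_of_nonneg_right (Real.exp_le_exp.2 hre.1) (norm_nonneg _)

lemma cont_x (h : CharFlow T R₁ R₀ r₂ β F) {t : ℝ} (ht : t ∈ Ioc (0:ℝ) T) {x : ℂ}
    (hx : x ∈ ball (0:ℂ) R₁) : ContinuousAt (F t) x := by
  obtain ⟨M, hM0, hM⟩ := h.bounds ht.1
  have : Tendsto (fun y => Real.exp M * ‖y - x‖) (𝓝 x) (𝓝 0) := by
    have : Tendsto (fun y => Real.exp M * ‖y - x‖) (𝓝 x) (𝓝 (Real.exp M * ‖x - x‖)) :=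
      Continuous.continuousAt (by fun_prop)
    simpa using this
  refine tendsto_iff_norm_sub_tendsto_zero.2 (squeeze_zero' (Eventually.of_forall fun _ => norm_nonneg _) ?_ this)
  filter_upwards [isOpen_ball.mem_nhds hx] with y hy
  exact (hM x hx y hy t ⟨le_rfl, ht.2⟩).1

lemma hasDeriv (h : CharFlow T R₁ R₀ r₂ β F) {t : ℝ} (ht : t ∈ Ioc (0:ℝ) T) {x : ℂ}
    (hx : x ∈ ball (0:ℂ) R₁) : ∃ d : ℂ, d ≠ 0 ∧ HasDerivAt (F t) d x := by
  refine ⟨Complex.exp (-∫ s in t..T, deriv (β s) (F s x)), Complex.exp_ne_zero _, ?_⟩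
  rw [hasDerivAt_iff_tendsto_slope]
  obtain ⟨L, hL0, hL⟩ := h.quot_le ht.1
  have hev : ∀ᶠ y in 𝓝[≠] x, y ∈ ball (0:ℂ) R₁ ∧ y ≠ x :=
    (eventually_nhdsWithin_of_eventually_nhds (isOpen_ball.mem_nhds hx)).and self_mem_nhdsWithin
  have key : Tendsto (fun y => ∫ s in t..T, (β s (F s y) - β s (F s x)) / (F s y - F s x))
      (𝓝[≠] x) (𝓝 (∫ s in t..T, deriv (β s) (F s x))) := by
    refine intervalIntegral.tendsto_integral_filter_of_dominated_convergence (fun _ => L) ?_ ?_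
      (by simp) ?_
    · filter_upwards [hev] with y hy
      exact ((h.cont_quot hx hy.1 hy.2).mono (uIoc_sub ht h.hTT)).aestronglyMeasurable
        measurableSet_uIoc
    · filter_upwards [hev] with y hy
      refine ae_of_all _ fun s hs => ?_
      rw [uIoc_of_le ht.2] at hs
      exact hL x hx y hy.1 s ⟨hs.1.le, hs.2⟩
    · refine ae_of_all _ fun s hs => ?_
      have hs' := uIoc_sub ht h.hTT hs
      have hd : HasDerivAt (β s) (deriv (β s) (F s x)) (F s x) :=
        ((h.hβ.2 s hs').differentiableAt
          (isOpen_ball.mem_nhds (h.sub (h.hFK x hx s hs')))).hasDerivAt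
      rw [hasDerivAt_iff_tendsto_slope] at hd
      have hF : Tendsto (F s) (𝓝[≠] x) (𝓝[≠] (F s x)) := by
        refine tendsto_nhdsWithin_iff.2
          ⟨(h.cont_x hs' hx).tendsto.mono_left nhdsWithin_le_nhds, ?_⟩
        filter_upwards [hev] with y hy e
        exact hy.2 (h.inj hy.1 hx hs' e)
      refine (hd.comp hF).congr fun y => ?_
      simp only [Function.comp, slope_def_field]
  refine (key.neg.cexp).congr' ?_
  filter_upwards [hev] with y hy
  rw [slope_def_field, h.formula hx hy.1 hy.2 ht, mul_div_cancel_left₀]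
  exact sub_ne_zero.2 hy.2

lemma memX0 (h : CharFlow T R₁ R₀ r₂ β F) : MemX0 (Ioc 0 T) R₁ F := by
  refine ⟨(relOpen_prod T R₁).continuousOn ?_, fun t ht x hx => ?_⟩
  · rintro t x ⟨ht, hx⟩
    dsimp only at ht hx ⊢
    have ht2 : 0 < t / 2 := by linarith [ht.1]
    obtain ⟨M, hM0, hM⟩ := h.bounds ht2
    have e1 : Tendsto (fun q : ℝ × ℂ => F q.1 x) (𝓝[Ioc 0 T] t ×ˢ 𝓝 x) (𝓝 (F t x)) :=
      (h.cont_t hx t ht).tendsto.comp tendsto_fst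
    have e2 : Tendsto (fun q : ℝ × ℂ => F q.1 q.2 - F q.1 x) (𝓝[Ioc 0 T] t ×ˢ 𝓝 x) (𝓝 0) := by
      have hz : Tendsto (fun q : ℝ × ℂ => Real.exp M * ‖q.2 - x‖) (𝓝[Ioc 0 T] t ×ˢ 𝓝 x)
          (𝓝 0) := by
        have : Tendsto (fun y => Real.exp M * ‖y - x‖) (𝓝 x) (𝓝 (Real.exp M * ‖x - x‖)) :=
          Continuous.continuousAt (by fun_prop)
        simp only [sub_self, norm_zero, mul_zero] at this
        exact this.comp tendsto_snd
      refine squeeze_zero_norm' ?_ hz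
      have n1 : Ioi (t / 2) ∩ Ioc 0 T ∈ 𝓝[Ioc 0 T] t :=
        inter_mem (mem_nhdsWithin_of_mem_nhds (Ioi_mem_nhds (by linarith [ht.1])))
          self_mem_nhdsWithin
      filter_upwards [prod_mem_prod n1 (isOpen_ball.mem_nhds hx)] with q hq
      exact (hM x hx q.2 hq.2 q.1 ⟨(mem_Ioi.1 hq.1.1).le, hq.1.2.2⟩).1
    simpa using e1.add e2
  · obtain ⟨d, -, hd⟩ := h.hasDeriv ht hx
    exact hd.differentiableAt.differentiableWithinAt

/-- the domain swept out by the characteristics. -/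
def Dom (T R₁ : ℝ) (F : ℝ → ℂ → ℂ) : Set (ℝ × ℂ) :=
  {p : ℝ × ℂ | p.1 ∈ Ioc (0 : ℝ) T ∧ ∃ x₀ ∈ ball (0 : ℂ) R₁, p.2 = F p.1 x₀}

/-- the inverse of the flow. -/
def G (R₁ : ℝ) (F : ℝ → ℂ → ℂ) (t : ℝ) (x : ℂ) : ℂ :=
  Function.invFunOn (F t) (ball (0:ℂ) R₁) x

lemma G_mem {t : ℝ} {x : ℂ} (hp : (t, x) ∈ Dom T R₁ F) : G R₁ F t x ∈ ball (0:ℂ) R₁ := by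
  obtain ⟨x₀, hx₀, e⟩ := hp.2
  exact Function.invFunOn_mem ⟨x₀, hx₀, e.symm⟩

lemma F_G {t : ℝ} {x : ℂ} (hp : (t, x) ∈ Dom T R₁ F) : F t (G R₁ F t x) = x := by
  obtain ⟨x₀, hx₀, e⟩ := hp.2
  exact Function.invFunOn_eq (f := F t) (s := ball (0:ℂ) R₁) ⟨x₀, hx₀, e.symm⟩

lemma F_mem {t : ℝ} {x : ℂ} (ht : t ∈ Ioc (0:ℝ) T) (hx : x ∈ ball (0:ℂ) R₁) :
    (t, F t x) ∈ Dom T R₁ F := ⟨ht, x, hx, rfl⟩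

lemma G_F (h : CharFlow T R₁ R₀ r₂ β F) {t : ℝ} {x : ℂ} (ht : t ∈ Ioc (0:ℝ) T)
    (hx : x ∈ ball (0:ℂ) R₁) : G R₁ F t (F t x) = x :=
  h.inj (G_mem (F_mem ht hx)) hx ht (F_G (F_mem ht hx))

lemma open_key (h : CharFlow T R₁ R₀ r₂ β F) {t : ℝ} {y : ℂ} (ht : t ∈ Ioc (0:ℝ) T)
    (hy : y ∈ ball (0:ℂ) R₁) {r : ℝ} (hr : 0 < r) (hrR : closedBall y r ⊆ ball 0 R₁) :
    ∃ δ > 0, ∀ᶠ s in 𝓝[Ioc 0 T] t, ∀ x ∈ ball (F t y) δ, ∃ z ∈ closedBall y r, F s z = x := by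
  have ht2 : 0 < t / 2 := by linarith [ht.1]
  obtain ⟨M, hM0, hM⟩ := h.bounds ht2
  set c : ℝ := Real.exp (-M) * r with hc
  have hc0 : 0 < c := by positivity
  have n1 : Ioi (t / 2) ∩ Ioc 0 T ∈ 𝓝[Ioc 0 T] t :=
    inter_mem (mem_nhdsWithin_of_mem_nhds (Ioi_mem_nhds (by linarith [ht.1])))
      self_mem_nhdsWithin
  have n2 := (h.cont_t hy t ht).tendsto.eventually (ball_mem_nhds (F t y) (half_pos (half_pos hc0)))
  refine ⟨c / 2 / 2, by positivity, ?_⟩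
  filter_upwards [n1, n2] with s hs hs2 x hx
  have hd : DiffContOnCl ℂ (F s) (ball y r) :=
    DifferentiableOn.diffContOnCl (by
      rw [closure_ball y hr.ne']
      exact (h.memX0.2 s hs.2).mono hrR)
  have := hd.ball_subset_image_closedBall hr (ε := c) (fun z hz => by
      have := (hM y hy z (hrR (sphere_subset_closedBall hz)) s ⟨(mem_Ioi.1 hs.1).le, hs.2.2⟩).2
      rwa [mem_sphere_iff_norm.1 hz] at this) (by
      have : ∀ᶠ z in 𝓝[≠] y, F s z ≠ F s y := by
        filter_upwards [mem_nhdsWithin_of_mem_nhds (isOpen_ball.mem_nhds hy),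
          self_mem_nhdsWithin] with z hz hne e
        exact hne (h.inj hz hy hs.2 e)
      exact this.frequently.filter_mono nhdsWithin_le_nhds)
  have hx' : x ∈ ball (F s y) (c / 2) := by
    have a := mem_ball.1 hx
    have b := mem_ball'.1 hs2
    have := dist_triangle x (F t y) (F s y)
    rw [mem_ball]
    linarith
  exact this hx'

lemma relOpen (h : CharFlow T R₁ R₀ r₂ β F) : RelOpen T (Dom T R₁ F) := by
  rintro ⟨t, x⟩ ⟨ht, y, hy, e⟩
  dsimp only at ht e
  refine ⟨ht, ?_⟩
  obtain ⟨r, hr, hrR⟩ := Metric.nhds_basis_closedBall.mem_iff.1 (isOpen_ball.mem_nhds hy)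
  obtain ⟨δ, hδ, hev⟩ := h.open_key ht hy hr hrR
  refine ⟨δ, hδ, ?_⟩
  filter_upwards [hev, self_mem_nhdsWithin] with s hs hsI x' hx'
  simp only [e] at hx'
  obtain ⟨z, hz, ez⟩ := hs x' hx'
  exact ⟨hsI, z, hrR hz, ez.symm⟩

lemma G_memX0W (h : CharFlow T R₁ R₀ r₂ β F) : MemX0W (Dom T R₁ F) (G R₁ F) := by
  have hcont : ContinuousOn (fun p : ℝ × ℂ => G R₁ F p.1 p.2) (Dom T R₁ F) := by
    refine h.relOpen.continuousOn ?_
    rintro t x ⟨ht, y, hy, e⟩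
    dsimp only at ht e ⊢
    subst e
    rw [h.G_F ht hy, Metric.nhds_basis_closedBall.tendsto_right_iff]
    intro r' hr'
    obtain ⟨r₀, hr₀, hrR₀⟩ := Metric.nhds_basis_closedBall.mem_iff.1 (isOpen_ball.mem_nhds hy)
    have hr : 0 < min r' r₀ := lt_min hr' hr₀
    have hrR := (closedBall_subset_closedBall (x := y) (min_le_right r' r₀)).trans hrR₀
    obtain ⟨δ, hδ, hev⟩ := h.open_key ht hy hr hrR
    filter_upwards [prod_mem_prod (inter_mem hev self_mem_nhdsWithin) (ball_mem_nhds (F t y) hδ)]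
      with q hq
    obtain ⟨z, hz, ez⟩ := hq.1.1 q.2 hq.2
    rw [← ez, h.G_F hq.1.2 (hrR hz)]
    exact closedBall_subset_closedBall (min_le_left r' r₀) hz
  refine ⟨hcont, fun t x hp => ?_⟩
  have hp' : (t, x) ∈ Dom T R₁ F := hp
  have hnh : {y : ℂ | (t, y) ∈ Dom T R₁ F} ∈ 𝓝 x := (h.relOpen.isOpen_slice t).mem_nhds hp
  have hc : ContinuousAt (G R₁ F t) x := by
    have : ContinuousOn (G R₁ F t) {y : ℂ | (t, y) ∈ Dom T R₁ F} :=
      hcont.comp (f := fun y : ℂ => (t, y)) (by fun_prop) fun y hy => hy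
    exact this.continuousAt hnh
  obtain ⟨d, hd0, hd⟩ := h.hasDeriv hp'.1 (G_mem hp')
  have := HasDerivAt.of_local_left_inverse hc hd hd0 (by
    filter_upwards [hnh] with y hy
    exact F_G hy)
  exact this.differentiableAt.differentiableWithinAt

end CharFlow

lemma MemX0.divt {T R : ℝ} {f : ℝ → ℂ → ℂ} (h : MemX0 (Ioc 0 T) R f) :
    MemX0 (Ioc 0 T) R (fun t x => f t x / (t:ℂ)) := by
  refine ⟨h.1.div (by fun_prop) fun p hp => ?_, fun t ht => (h.2 t ht).div_const _⟩
  exact Complex.ofReal_ne_zero.2 hp.1.1.ne'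

lemma MemX0.mul' {T R : ℝ} {f g : ℝ → ℂ → ℂ} (hf : MemX0 (Ioc 0 T) R f)
    (hg : MemX0 (Ioc 0 T) R g) : MemX0 (Ioc 0 T) R (fun t x => f t x * g t x) :=
  ⟨hf.1.mul hg.1, fun t ht => (hf.2 t ht).mul (hg.2 t ht)⟩

lemma MemX0.sub' {T R : ℝ} {f g : ℝ → ℂ → ℂ} (hf : MemX0 (Ioc 0 T) R f)
    (hg : MemX0 (Ioc 0 T) R g) : MemX0 (Ioc 0 T) R (fun t x => f t x - g t x) :=
  ⟨hf.1.sub hg.1, fun t ht => (hf.2 t ht).sub (hg.2 t ht)⟩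

lemma MemX0.neg' {T R : ℝ} {f : ℝ → ℂ → ℂ} (hf : MemX0 (Ioc 0 T) R f) :
    MemX0 (Ioc 0 T) R (fun t x => -f t x) :=
  ⟨hf.1.neg, fun t ht => (hf.2 t ht).neg⟩

lemma MemX0.cexp' {T R : ℝ} {f : ℝ → ℂ → ℂ} (hf : MemX0 (Ioc 0 T) R f) :
    MemX0 (Ioc 0 T) R (fun t x => Complex.exp (f t x)) :=
  ⟨hf.1.cexp, fun t ht => (hf.2 t ht).cexp⟩

namespace CharFlow

variable {T R₁ R₀ r₂ : ℝ} {β F : ℝ → ℂ → ℂ}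

lemma comp_F (h : CharFlow T R₁ R₀ r₂ β F) {f : ℝ → ℂ → ℂ} (hf : MemX0W (Dom T R₁ F) f) :
    MemX0 (Ioc 0 T) R₁ (fun t x => f t (F t x)) := by
  refine ⟨hf.1.comp (f := fun p : ℝ × ℂ => (p.1, F p.1 p.2))
    (continuousOn_fst.prodMk h.memX0.1) fun p hp => F_mem hp.1 hp.2, fun t ht => ?_⟩
  exact (hf.2 t).comp (h.memX0.2 t ht) fun x hx => F_mem ht hx

lemma comp_G (h : CharFlow T R₁ R₀ r₂ β F) {f : ℝ → ℂ → ℂ} (hf : MemX0 (Ioc 0 T) R₁ f) :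
    MemX0W (Dom T R₁ F) (fun t x => f t (G R₁ F t x)) := by
  refine ⟨hf.1.comp (f := fun p : ℝ × ℂ => (p.1, G R₁ F p.1 p.2))
    (continuousOn_fst.prodMk h.G_memX0W.1) fun p hp => ⟨hp.1, G_mem hp⟩, fun t x hx => ?_⟩
  exact ((hf.2 t hx.1).comp (h.G_memX0W.2 t) fun x hx => G_mem hx) x hx

lemma restrict (h : CharFlow T R₁ R₀ r₂ β F) {f : ℝ → ℂ → ℂ} (hf : MemX0 (Ioc 0 T) R₀ f) :
    MemX0W (Dom T R₁ F) f := by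
  have hs : Dom T R₁ F ⊆ Ioc (0:ℝ) T ×ˢ ball (0:ℂ) R₀ := by
    rintro ⟨t, x⟩ ⟨ht, y, hy, e⟩
    exact ⟨ht, e ▸ h.sub (h.hFK y hy t ht)⟩
  exact ⟨hf.1.mono hs, fun t => (hf.toW.2 t).mono fun y hy => hs hy⟩

/-- a solution along a characteristic satisfies a linear ODE. -/
lemma ode_of_solves (h : CharFlow T R₁ R₀ r₂ β F) {lam b g w : ℝ → ℂ → ℂ}
    (hβb : ∀ t x, β t x = -(b t x) / (t:ℂ))
    (hw : MemX0W (Dom T R₁ F) w) (hs : SolvesLW (Dom T R₁ F) lam b g w) {y : ℂ}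
    (hy : y ∈ ball (0:ℂ) R₁) {t : ℝ} (ht : t ∈ Ioc (0:ℝ) T) :
    HasDerivWithinAt (fun s => w s (F s y))
      (lam t (F t y) / (t:ℂ) * w t (F t y) + g t (F t y) / (t:ℂ)) (Ioc 0 T) t := by
  have hp : (t, F t y) ∈ Dom T R₁ F := F_mem ht hy
  have h1 : HasDerivWithinAt (fun s => w s (F s y) - w s (F t y))
      (deriv (w t) (F t y) * (β t (F t y) - 0)) (Ioc 0 T) t :=
    chain_sub h.relOpen hw hp (c₁ := fun s => F s y) (c₂ := fun _ => F t y) rfl rfl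
      (h.hF y hy t ht).hasDerivWithinAt (hasDerivWithinAt_const _ _ _)
  have hmem : {s : ℝ | (s, F t y) ∈ Dom T R₁ F} ∈ 𝓝[Ioc 0 T] t := by
    obtain ⟨-, r, hr, hev⟩ := h.relOpen _ hp
    filter_upwards [hev] with s hs'
    exact hs' _ (mem_ball_self hr)
  have h2 : HasDerivWithinAt (fun s => w s (F t y)) ((lam t (F t y) * w t (F t y) +
      b t (F t y) * deriv (w t) (F t y) + g t (F t y)) / (t : ℂ)) (Ioc 0 T) t :=
    (hs t (F t y) hp ht.1).mono_of_mem_nhdsWithin hmem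
  have h3 := h1.fun_add h2
  have e : deriv (w t) (F t y) * (β t (F t y) - 0) + (lam t (F t y) * w t (F t y) +
      b t (F t y) * deriv (w t) (F t y) + g t (F t y)) / (t : ℂ) =
      lam t (F t y) / (t:ℂ) * w t (F t y) + g t (F t y) / (t:ℂ) := by
    rw [hβb]
    ring
  rw [e] at h3
  exact h3.congr_of_mem (fun s _ => (sub_add_cancel _ _).symm) ht

/-- conversely, a function solving the ODE along characteristics solves the equation. -/
lemma solves_of_ode (h : CharFlow T R₁ R₀ r₂ β F) {lam b g w : ℝ → ℂ → ℂ}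
    (hβb : ∀ t x, β t x = -(b t x) / (t:ℂ))
    (hw : MemX0W (Dom T R₁ F) w)
    (ho : ∀ y ∈ ball (0:ℂ) R₁, ∀ t ∈ Ioc (0:ℝ) T, HasDerivWithinAt (fun s => w s (F s y))
      (lam t (F t y) / (t:ℂ) * w t (F t y) + g t (F t y) / (t:ℂ)) (Ioc 0 T) t) :
    SolvesLW (Dom T R₁ F) lam b g w := by
  rintro t x hp -
  obtain ⟨ht, y, hy, e⟩ := id hp
  dsimp only at ht e
  have h1 := chain_sub h.relOpen hw hp (c₁ := fun _ => x) (c₂ := fun s => F s y) rfl e.symm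
    (hasDerivWithinAt_const _ _ _) (h.hF y hy t ht).hasDerivWithinAt
  have h2 := ho y hy t ht
  have h3 : HasDerivWithinAt (fun s => w s x)
      ((lam t x * w t x + b t x * deriv (w t) x + g t x) / (t : ℂ)) (Ioc 0 T) t := by
    refine ((h1.fun_add h2).congr_deriv ?_).congr_of_mem (fun s _ => by ring) ht
    rw [hβb, ← e]
    ring
  exact h3.mono fun s hs => hs.1

lemma memX1 (h : CharFlow T R₁ R₀ r₂ β F) {lam b g w : ℝ → ℂ → ℂ}
    (hlam : MemX0W (Dom T R₁ F) lam) (hb : MemX0W (Dom T R₁ F) b) (hg : MemX0W (Dom T R₁ F) g)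
    (hw : MemX0W (Dom T R₁ F) w) (hs : SolvesLW (Dom T R₁ F) lam b g w) :
    MemX1W (Dom T R₁ F) w := by
  refine ⟨hw, fun t x => lam t x * w t x + b t x * deriv (w t) x + g t x, ⟨?_, fun t => ?_⟩, hs⟩
  · exact ((hlam.1.mul hw.1).add (hb.1.mul (continuousOn_deriv h.relOpen hw))).add hg.1
  · exact (((hlam.2 t).mul (hw.2 t)).add
      ((hb.2 t).mul ((hw.2 t).deriv (h.relOpen.isOpen_slice t)))).add (hg.2 t)

/-- the explicit solution in characteristic coordinates -/
def Wsol (T : ℝ) (ψ : ℂ → ℂ) (ℓ γ : ℝ → ℂ → ℂ) (t : ℝ) (y : ℂ) : ℂ :=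
  Complex.exp (-∫ s in t..T, ℓ s y) *
    (ψ y - ∫ τ in t..T, Complex.exp (∫ s in τ..T, ℓ s y) * γ τ y)

lemma Wsol_memX0 (hT : 0 < T) {ψ : ℂ → ℂ} {ℓ γ : ℝ → ℂ → ℂ}
    (hψ : DifferentiableOn ℂ ψ (ball (0:ℂ) R₁)) (hℓ : MemX0 (Ioc 0 T) R₁ ℓ)
    (hγ : MemX0 (Ioc 0 T) R₁ γ) : MemX0 (Ioc 0 T) R₁ (Wsol T ψ ℓ γ) := by
  have hψ' : MemX0 (Ioc 0 T) R₁ (fun _ => ψ) :=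
    ⟨hψ.continuousOn.comp (f := fun p : ℝ × ℂ => p.2) continuousOn_snd fun p hp => hp.2,
      fun _ _ => hψ⟩
  have hΛ := memX0_integral hT hℓ
  exact hΛ.neg'.cexp'.mul' (hψ'.sub' (memX0_integral hT (hΛ.cexp'.mul' hγ)))

lemma Wsol_deriv (hT : 0 < T) {ψ : ℂ → ℂ} {ℓ γ : ℝ → ℂ → ℂ} (hℓ : MemX0 (Ioc 0 T) R₁ ℓ)
    (hγ : MemX0 (Ioc 0 T) R₁ γ) {y : ℂ} (hy : y ∈ ball (0:ℂ) R₁) {t : ℝ}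
    (ht : t ∈ Ioc (0:ℝ) T) :
    HasDerivWithinAt (fun s => Wsol T ψ ℓ γ s y) (ℓ t y * Wsol T ψ ℓ γ t y + γ t y)
      (Ioc 0 T) t := by
  have h1 := int_deriv ht (hℓ.cont_t hy)
  have h2 := int_deriv ht (((memX0_integral hT hℓ).cexp'.mul' hγ).cont_t hy)
  refine ((h1.fun_neg.cexp).fun_mul (h2.const_sub (ψ y))).congr_deriv ?_
  have e : Complex.exp (-∫ s in t..T, ℓ s y) * Complex.exp (∫ s in t..T, ℓ s y) = 1 := by
    rw [← Complex.exp_add]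
    simp
  simp only [Wsol]
  linear_combination γ t y * e

lemma Wsol_formula {ψ : ℂ → ℂ} {ℓ γ : ℝ → ℂ → ℂ} (hℓ : MemX0 (Ioc 0 T) R₁ ℓ)
    {y : ℂ} (hy : y ∈ ball (0:ℂ) R₁) {t : ℝ} (ht : t ∈ Ioc (0:ℝ) T) :
    Wsol T ψ ℓ γ t y = ψ y * Complex.exp (-∫ s in t..T, ℓ s y)
      - ∫ τ in t..T, Complex.exp (-∫ s in t..τ, ℓ s y) * γ τ y := by
  have hTT : T ∈ Ioc (0:ℝ) T := ⟨ht.1.trans_le ht.2, le_rfl⟩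
  have : ∫ τ in t..T, Complex.exp (-∫ s in t..τ, ℓ s y) * γ τ y
      = Complex.exp (-∫ s in t..T, ℓ s y) *
        ∫ τ in t..T, Complex.exp (∫ s in τ..T, ℓ s y) * γ τ y := by
    rw [← intervalIntegral.integral_const_mul]
    refine intervalIntegral.integral_congr fun τ hτ => ?_
    have hτ' := uIcc_sub ht hTT hτ
    have := intervalIntegral.integral_add_adjacent_intervals (intInt ht hτ' (hℓ.cont_t hy))
      (intInt hτ' hTT (hℓ.cont_t hy))
    rw [← mul_assoc, ← Complex.exp_add, ← this]
    congr 2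
    ring
  rw [this, Wsol]
  ring

theorem main (h : CharFlow T R₁ R₀ r₂ β F) {lam b g : ℝ → ℂ → ℂ} {ψ : ℂ → ℂ}
    (hβb : ∀ t x, β t x = -(b t x) / (t:ℂ))
    (hlam : MemX0 (Ioc 0 T) R₀ lam) (hb : MemX0 (Ioc 0 T) R₀ b) (hg : MemX0W (Dom T R₁ F) g)
    (hψ : DifferentiableOn ℂ ψ (ball (0:ℂ) R₁)) :
    ∃ w : ℝ → ℂ → ℂ,
      MemX1W (Dom T R₁ F) w ∧
      SolvesLW (Dom T R₁ F) lam b g w ∧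
      (∀ x₀ ∈ Metric.ball (0:ℂ) R₁, w T x₀ = ψ x₀) ∧
      (∀ x₀ ∈ Metric.ball (0:ℂ) R₁, ∀ t ∈ Set.Ioc (0:ℝ) T,
        w t (F t x₀) =
          ψ x₀ * Complex.exp (-(∫ s in t..T, lam s (F s x₀) / (s:ℂ)))
            - ∫ τ in t..T,
                Complex.exp (-(∫ s in t..τ, lam s (F s x₀) / (s:ℂ)))
                  * (g τ (F τ x₀) / (τ:ℂ))) ∧
      (∀ w' : ℝ → ℂ → ℂ, MemX1W (Dom T R₁ F) w' → SolvesLW (Dom T R₁ F) lam b g w' →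
        (∀ x₀ ∈ Metric.ball (0:ℂ) R₁, w' T x₀ = ψ x₀) →
        ∀ p ∈ Dom T R₁ F, w' p.1 p.2 = w p.1 p.2) := by
  have hlD := h.restrict hlam
  have hbD := h.restrict hb
  have hℓ := (h.comp_F hlD).divt
  have hγ := (h.comp_F hg).divt
  set ℓ : ℝ → ℂ → ℂ := fun t x => lam t (F t x) / (t:ℂ) with hℓdef
  set γ : ℝ → ℂ → ℂ := fun t x => g t (F t x) / (t:ℂ) with hγdef
  have hW := Wsol_memX0 h.hT hψ hℓ hγ
  set w : ℝ → ℂ → ℂ := fun t x => Wsol T ψ ℓ γ t (G R₁ F t x) with hwdef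
  have hwF : ∀ y ∈ ball (0:ℂ) R₁, ∀ t ∈ Ioc (0:ℝ) T, w t (F t y) = Wsol T ψ ℓ γ t y := by
    intro y hy t ht
    simp only [hwdef, h.G_F ht hy]
  have hw : MemX0W (Dom T R₁ F) w := h.comp_G hW
  have hsol : SolvesLW (Dom T R₁ F) lam b g w := by
    refine h.solves_of_ode hβb hw fun y hy t ht => ?_
    have := Wsol_deriv (ψ := ψ) h.hT hℓ hγ hy ht
    rw [hwF y hy t ht]
    exact this.congr_of_mem (fun s hs => hwF y hy s hs) ht
  have hini : ∀ x₀ ∈ Metric.ball (0:ℂ) R₁, w T x₀ = ψ x₀ := by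
    intro x hx
    have := hwF x hx T h.hTT
    rw [h.hFT x hx] at this
    rw [this, Wsol]
    simp
  refine ⟨w, h.memX1 hlD hbD hg hw hsol, hsol, hini, fun x hx t ht => ?_, ?_⟩
  · rw [hwF x hx t ht, Wsol_formula hℓ hx ht]
  · rintro w' hw' hs' hi' ⟨t, x⟩ ⟨ht, y, hy, e⟩
    dsimp only at ht e ⊢
    subst e
    have := lin_sol ht (z := fun s => w' s (F s y) - w s (F s y)) (hℓ.cont_t hy) fun s hs => by
      refine ((h.ode_of_solves hβb hw'.1 hs' hy hs).fun_sub
        (h.ode_of_solves hβb hw hsol hy hs)).congr_deriv ?_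
      simp only [hℓdef]
      ring
    simp only [h.hFT y hy, hi' y hy, hini y hy, sub_self, zero_mul] at this
    exact sub_eq_zero.1 this

end CharFlow

/-- Proposition 4.2: on the characteristic domain `𝒟`, for every `g ∈ X₀(𝒟)` and every
`ψ` holomorphic on `D_{R₁}`, the Cauchy problem `t ∂w/∂t - λ w - b ∂w/∂x = g`,
`w(T,·) = ψ`, has a unique solution `w ∈ X₁(𝒟)`, given by the explicit
characteristic formula (4.3). -/
theorem statement5
    (T₀ R₀ : ℝ) (hT₀ : 0 < T₀) (hR₀ : 0 < R₀)
    (m : ℝ → ℝ) (hm : IsWeight T₀ m)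
    (lam b : ℝ → ℂ → ℂ)
    (hlamX : MemX0 (Set.Icc 0 T₀) R₀ lam) (hbX : MemX0 (Set.Icc 0 T₀) R₀ b)
    (B : ℝ) (hB : 0 < B)
    (hb : ∀ t ∈ Set.Ioc (0:ℝ) T₀, ∀ x ∈ Metric.ball (0:ℂ) R₀, ‖b t x‖ ≤ B * m t)
    (T R R₁ : ℝ) (hT : 0 < T) (hTT₀ : T < T₀)
    (hR : 0 < R) (hRR₁ : R < R₁) (hR₁R₀ : R₁ < R₀)
    (hgap1 : R + B * wphi m T < R₁) (hgap2 : R₁ + B * wphi m T < R₀)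
    -- `Φ t t₀ x₀` is the characteristic `φ(t; t₀, x₀)`, the unique solution of
    -- `dx/dt = -b(t,x)/t`, `x(t₀) = x₀` :
    (Φ : ℝ → ℝ → ℂ → ℂ)
    (hΦinit : ∀ t₀ ∈ Set.Ioc (0:ℝ) T, ∀ x₀ ∈ Metric.ball (0:ℂ) R₁, Φ t₀ t₀ x₀ = x₀)
    (hΦode : ∀ t₀ ∈ Set.Ioc (0:ℝ) T, ∀ x₀ ∈ Metric.ball (0:ℂ) R₁, ∀ t ∈ Set.Ioc (0:ℝ) T,
      Φ t t₀ x₀ ∈ Metric.ball (0:ℂ) R₀ ∧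
      HasDerivAt (fun s => Φ s t₀ x₀) (-(b t (Φ t t₀ x₀)) / (t:ℂ)) t)
    (hΦuniq : ∀ t₀ ∈ Set.Ioc (0:ℝ) T, ∀ x₀ ∈ Metric.ball (0:ℂ) R₁, ∀ y : ℝ → ℂ,
      y t₀ = x₀ →
      (∀ t ∈ Set.Ioc (0:ℝ) T, y t ∈ Metric.ball (0:ℂ) R₀ ∧
        HasDerivAt y (-(b t (y t)) / (t:ℂ)) t) →
      ∀ t ∈ Set.Ioc (0:ℝ) T, y t = Φ t t₀ x₀)
    (g : ℝ → ℂ → ℂ) (hg : MemX0W (Dchar T R₁ Φ) g)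
    (ψ : ℂ → ℂ) (hψ : DifferentiableOn ℂ ψ (Metric.ball (0:ℂ) R₁)) :
    ∃ w : ℝ → ℂ → ℂ,
      MemX1W (Dchar T R₁ Φ) w ∧
      SolvesLW (Dchar T R₁ Φ) lam b g w ∧
      (∀ x₀ ∈ Metric.ball (0:ℂ) R₁, w T x₀ = ψ x₀) ∧
      -- the explicit formula (4.3), written along the characteristic through `(T, x₀)` :
      (∀ x₀ ∈ Metric.ball (0:ℂ) R₁, ∀ t ∈ Set.Ioc (0:ℝ) T,
        w t (Φ t T x₀) =
          ψ x₀ * Complex.exp (-(∫ s in t..T, lam s (Φ s T x₀) / (s:ℂ)))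
            - ∫ τ in t..T,
                Complex.exp (-(∫ s in t..τ, lam s (Φ s T x₀) / (s:ℂ)))
                  * (g τ (Φ τ T x₀) / (τ:ℂ))) ∧
      -- uniqueness :
      (∀ w' : ℝ → ℂ → ℂ, MemX1W (Dchar T R₁ Φ) w' → SolvesLW (Dchar T R₁ Φ) lam b g w' →
        (∀ x₀ ∈ Metric.ball (0:ℂ) R₁, w' T x₀ = ψ x₀) →
        ∀ p ∈ Dchar T R₁ Φ, w' p.1 p.2 = w p.1 p.2) := by
  have hsubI : Ioc (0:ℝ) T ⊆ Icc 0 T₀ := fun t ht => ⟨ht.1.le, ht.2.trans hTT₀.le⟩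
  have hsubO : Ioc (0:ℝ) T ⊆ Ioc 0 T₀ := fun t ht => ⟨ht.1, ht.2.trans hTT₀.le⟩
  have hlam' : MemX0 (Ioc 0 T) R₀ lam :=
    ⟨hlamX.1.mono (prod_mono hsubI subset_rfl), fun t ht => hlamX.2 t (hsubI ht)⟩
  have hb' : MemX0 (Ioc 0 T) R₀ b :=
    ⟨hbX.1.mono (prod_mono hsubI subset_rfl), fun t ht => hbX.2 t (hsubI ht)⟩
  have hTT : T ∈ Ioc (0:ℝ) T := ⟨hT, le_rfl⟩
  have hmint : IntegrableOn (fun τ => m τ / τ) (Ioc 0 T) := hm.2.2.2.mono_set hsubO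
  have hflow : CharFlow T R₁ R₀ (R₁ + B * wphi m T) (fun t x => -(b t x) / (t:ℂ))
      (fun t x => Φ t T x) := by
    refine ⟨hT, hgap2, hb'.neg'.divt, hΦinit T hTT, fun x hx t ht => ?_,
      fun x hx t ht => (hΦode T hTT x hx t ht).2⟩
    have hcont : ContinuousOn (fun s => -(b s (Φ s T x)) / (s:ℂ)) (Ioc 0 T) :=
      hb'.neg'.divt.1.comp (f := fun s : ℝ => (s, Φ s T x))
        (continuousOn_id.prodMk fun s hs =>
          (hΦode T hTT x hx s hs).2.continuousAt.continuousWithinAt)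
        fun s hs => ⟨hs, (hΦode T hTT x hx s hs).1⟩
    have hftc := intervalIntegral.integral_eq_sub_of_hasDerivAt
      (fun s hs => (hΦode T hTT x hx s (uIcc_sub ht hTT hs)).2) (intInt ht hTT hcont)
    rw [hΦinit T hTT x hx] at hftc
    have hIt : IntegrableOn (fun τ => B * (m τ / τ)) (Ioc t T) :=
      (hmint.mono_set (Ioc_subset_Ioc_left ht.1.le)).const_mul B
    have hle : ‖∫ s in t..T, -(b s (Φ s T x)) / (s:ℂ)‖ ≤ ∫ s in t..T, B * (m s / s) := by
      refine intervalIntegral.norm_integral_le_of_norm_le ht.2 (ae_of_all _ fun s hs => ?_)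
        ((intervalIntegrable_iff_integrableOn_Ioc_of_le ht.2).2 hIt)
      have hs' : s ∈ Ioc 0 T := ⟨ht.1.trans hs.1, hs.2⟩
      rw [norm_div, norm_neg, Complex.norm_real, Real.norm_of_nonneg hs'.1.le, ← mul_div_assoc]
      exact div_le_div_of_nonneg_right (hb s (hsubO hs') _ (hΦode T hTT x hx s hs').1) hs'.1.le
    have hle2 : ∫ s in t..T, B * (m s / s) ≤ B * wphi m T := by
      rw [intervalIntegral.integral_const_mul, intervalIntegral.integral_of_le ht.2, wphi]
      refine mul_le_mul_of_nonneg_left ?_ hB.le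
      refine setIntegral_mono_set hmint ?_ (Ioc_subset_Ioc_left ht.1.le).eventuallyLE
      filter_upwards [ae_restrict_mem measurableSet_Ioc] with s hs
      exact div_nonneg (hm.2.2.1 s (hsubO hs)).le hs.1.le
    rw [hftc] at hle
    rw [mem_closedBall_zero_iff]
    rw [mem_ball_zero_iff] at hx
    have := norm_sub_norm_le (Φ t T x) x
    rw [norm_sub_rev] at this
    linarith
  exact hflow.main (fun _ _ => rfl) hlam' hb' hg hψ
end
end

section
/- In the setting of the characteristic domain 𝒟 for the operator L = t·∂/∂t − λ(t,x) − b(t,x)·∂/∂x (with |b(t,x)| ≤ B·m(t)): assume additionally that 0 < a₀ ≤ Re λ(t,x) on 𝒟. If ψ and ψ' are bounded on D_{R₁}, and g ∈ X₁(𝒟) satisfies max(|g(t,x)|, |(∂g/∂x)(t,x)|) ≤ G·t^μ on 𝒟 for some G > 0 and 0 < μ < a₀, then the unique solution w ∈ X₁(𝒟) of Lw = g with w(T,x) = ψ(x) satisfies a bound max(|w(t,x)|, |(∂w/∂x)(t,x)|) ≤ C·t^μ on 𝒟 for some C > 0; in particular one has |w(t,x)| ≤ M·(t/T)^{a₀}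 + (G/(a₀−μ))·t^μ on 𝒟 when |ψ| ≤ M on D_{R₁} and |g| ≤ G·t^μ on 𝒟. -/
open Set Filter MeasureTheory Metric Topology Complex

noncomputable section

lemma aux_intfac {q : ℝ → ℂ} {t T : ℝ} (hq : ContinuousOn q (Icc t T)) :
    ∀ s ∈ Icc t T, HasDerivWithinAt (fun u => ∫ x in t..u, q x) (q s) (Icc t T) s := by
  intro s hs
  have : Fact (s ∈ Icc t T) := ⟨hs⟩
  apply intervalIntegral.integral_hasDerivWithinAt_right
  · apply ContinuousOn.intervalIntegrable
    rw [uIcc_of_le hs.1]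
    exact hq.mono (Icc_subset_Icc_right hs.2)
  · exact hq.stronglyMeasurableAtFilter_nhdsWithin measurableSet_Icc s
  · exact hq s hs

lemma aux_right {f : ℝ → ℂ} {f' : ℂ} {t T s : ℝ} (hs : s ∈ Ico t T)
    (h : HasDerivWithinAt f f' (Icc t T) s) : HasDerivWithinAt f f' (Ici s) s := by
  apply h.mono_of_mem_nhdsWithin
  exact mem_of_superset (Icc_mem_nhdsGE hs.2) (Icc_subset_Icc_left hs.1)

lemma aux_lin_ode {d Q : ℝ → ℂ} {t T : ℝ} (htT : t ≤ T) (hQ : ContinuousOn Q (Icc t T))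
    (hd : ∀ s ∈ Icc t T, HasDerivWithinAt d (-(Q s) * d s) (Icc t T) s) :
    d t = d T * Complex.exp (∫ s in t..T, Q s) := by
  have key : ∀ s ∈ Icc t T, HasDerivWithinAt
      (fun u => d u * Complex.exp (∫ x in t..u, Q x)) 0 (Icc t T) s := by
    intro s hs
    have h := (hd s hs).mul ((aux_intfac hQ s hs).cexp)
    refine HasDerivWithinAt.congr_deriv (f := fun u => d u * Complex.exp (∫ x in t..u, Q x)) h ?_
    ring
  have := constant_of_has_deriv_right_zero (fun s hs => (key s hs).continuousWithinAt)
    (fun s hs => aux_right hs (key s (Ico_subset_Icc_self hs))) T (right_mem_Icc.2 htT)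
  simpa using this.symm

lemma aux_lip {f : ℂ → ℂ} {c : ℂ} {r R C : ℝ} (hr : r < R)
    (hf : DifferentiableOn ℂ f (ball c R))
    (hC : ∀ z ∈ closedBall c ((r + R) / 2), ‖f z‖ ≤ C) :
    ∀ y ∈ closedBall c r, ∀ z ∈ closedBall c r, ‖f y - f z‖ ≤ C / ((R - r) / 2) * ‖y - z‖ := by
  intro y hy z hz
  have hball : closedBall c r ⊆ ball c R := closedBall_subset_ball hr
  refine Convex.norm_image_sub_le_of_norm_deriv_le (𝕜 := ℂ) (s := closedBall c r) ?_ ?_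
    (convex_closedBall c r) hz hy
  · intro x hx
    exact hf.differentiableAt (isOpen_ball.mem_nhds (hball hx))
  · intro x hx
    have hsub : closedBall x ((R - r) / 2) ⊆ closedBall c ((r + R) / 2) := by
      apply closedBall_subset_closedBall'
      have := mem_closedBall.1 hx
      linarith
    apply Complex.norm_deriv_le_of_forall_mem_sphere_norm_le (by linarith)
    · apply DifferentiableOn.diffContOnCl
      rw [closure_ball _ (by linarith)]
      apply hf.mono
      exact hsub.trans (closedBall_subset_ball (by linarith))
    · intro z hz
      exact hC z (hsub (sphere_subset_closedBall hz))

lemma aux_est {y l h : ℝ → ℂ} {t T a₀ μ H M : ℝ} (ht : 0 < t) (htT : t ≤ T)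
    (hμ : μ < a₀) (hH : 0 ≤ H)
    (hl : ContinuousOn l (Icc t T))
    (hre : ∀ s ∈ Icc t T, a₀ ≤ (l s).re)
    (hh : ∀ s ∈ Icc t T, ‖h s‖ ≤ H * s ^ μ)
    (hy : ∀ s ∈ Icc t T, HasDerivWithinAt y ((l s * y s + h s) / (s : ℂ)) (Icc t T) s)
    (hM : ‖y T‖ ≤ M) :
    ‖y t‖ ≤ M * (t / T) ^ a₀ + H / (a₀ - μ) * t ^ μ := by
  have hT : 0 < T := ht.trans_le htT
  have hpos : ∀ s ∈ Icc t T, 0 < s := fun s hs => ht.trans_le hs.1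
  have hne : ∀ s ∈ Icc t T, (s : ℂ) ≠ 0 := fun s hs => by
    exact_mod_cast (hpos s hs).ne'
  set q : ℝ → ℂ := fun s => l s / (s : ℂ) with hq
  have hqc : ContinuousOn q (Icc t T) :=
    hl.div (Complex.continuous_ofReal.continuousOn) hne
  set N : ℝ → ℂ := fun u => ∫ x in t..u, q x with hN
  have hNd := aux_intfac hqc
  -- real part bound
  have hNre : ∀ s ∈ Icc t T, a₀ * Real.log (s / t) ≤ (N s).re := by
    intro s hs
    have hi : IntervalIntegrable q volume t s := by
      apply ContinuousOn.intervalIntegrable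
      rw [uIcc_of_le hs.1]
      exact hqc.mono (Icc_subset_Icc_right hs.2)
    have e1 : (N s).re = ∫ x in t..s, (q x).re := by
      have := Complex.reCLM.intervalIntegral_comp_comm hi
      simpa using this.symm
    rw [e1, ← integral_one_div_of_pos ht (hpos s hs), ← intervalIntegral.integral_const_mul]
    apply intervalIntegral.integral_mono_on hs.1
    · apply ContinuousOn.intervalIntegrable
      rw [uIcc_of_le hs.1]
      apply ContinuousOn.mul continuousOn_const
      apply ContinuousOn.div continuousOn_const continuousOn_id
      intro x hx
      exact (ht.trans_le hx.1).ne'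
    · apply ContinuousOn.intervalIntegrable
      rw [uIcc_of_le hs.1]
      exact Complex.continuous_re.comp_continuousOn (hqc.mono (Icc_subset_Icc_right hs.2))
    · intro x hx
      have hx' : x ∈ Icc t T := ⟨hx.1, hx.2.trans hs.2⟩
      simp only [hq, Complex.div_ofReal_re]
      rw [mul_one_div]
      exact div_le_div_of_nonneg_right (hre x hx') (hpos x hx').le
  have hexp : ∀ s ∈ Icc t T, ‖Complex.exp (-(N s))‖ ≤ (t / s) ^ a₀ := by
    intro s hs
    have hs0 := hpos s hs
    rw [Complex.norm_exp, Real.rpow_def_of_pos (by positivity)]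
    apply Real.exp_le_exp.2
    have : Real.log (t / s) = - Real.log (s / t) := by
      rw [← Real.log_inv, inv_div]
    rw [this, Complex.neg_re]
    linarith [hNre s hs]
  set f : ℝ → ℂ := fun s => Complex.exp (-(N s)) * y s with hf
  have hfd : ∀ s ∈ Icc t T, HasDerivWithinAt f (Complex.exp (-(N s)) * (h s / (s : ℂ)))
      (Icc t T) s := by
    intro s hs
    have := ((hNd s hs).neg.cexp).mul (hy s hs)
    refine HasDerivWithinAt.congr_deriv (f := f) this ?_
    have := hne s hs
    change Complex.exp (-(N s)) * -q s * y s + Complex.exp (-(N s)) * ((l s * y s + h s) / (s : ℂ))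
      = _
    simp only [hq]
    field_simp
    ring
  have hft : f t = y t := by simp [hf, hN]
  have hfT : ‖f T‖ ≤ M * (t / T) ^ a₀ := by
    rw [hf]
    simp only [norm_mul]
    rw [mul_comm]
    exact mul_le_mul hM (hexp T (right_mem_Icc.2 htT)) (norm_nonneg _)
      ((norm_nonneg _).trans hM)
  -- boundary function
  set Bd : ℝ → ℝ := fun s => t ^ a₀ * (H / (a₀ - μ)) * (t ^ (μ - a₀) - s ^ (μ - a₀)) with hBd
  have hBd' : ∀ s ∈ Icc t T, HasDerivAt Bd (t ^ a₀ * H * s ^ (μ - a₀ - 1)) s := by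
    intro s hs
    have h1 := (Real.hasDerivAt_rpow_const (x := s) (p := μ - a₀) (Or.inl (hpos s hs).ne'))
    have h2 := ((h1.const_sub (t ^ (μ - a₀)))).const_mul (t ^ a₀ * (H / (a₀ - μ)))
    refine HasDerivAt.congr_deriv (f := Bd) h2 ?_
    have : a₀ - μ ≠ 0 := by linarith
    field_simp
    ring
  have hdiff : ‖f T - f t‖ ≤ Bd T := by
    refine image_norm_le_of_norm_deriv_right_le_deriv_boundary' (a := t) (b := T)
      (f := fun s => f s - f t) (B := Bd) (B' := fun s => t ^ a₀ * H * s ^ (μ - a₀ - 1))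
      (f' := fun s => Complex.exp (-(N s)) * (h s / (s : ℂ)))
      ?_ ?_ ?_ ?_ ?_ ?_ (right_mem_Icc.2 htT)
    · intro s hs
      exact ((hfd s hs).sub_const (f t)).continuousWithinAt
    · intro s hs
      exact aux_right hs ((hfd s (Ico_subset_Icc_self hs)).sub_const (f t))
    · simp [hBd]
    · intro s hs
      exact (hBd' s hs).continuousAt.continuousWithinAt
    · intro s hs
      exact (hBd' s (Ico_subset_Icc_self hs)).hasDerivWithinAt
    · intro s hs
      have hs := Ico_subset_Icc_self hs
      have hs0 := hpos s hs
      rw [norm_mul, norm_div, Complex.norm_real, Real.norm_of_nonneg hs0.le]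
      calc _ ≤ (t / s) ^ a₀ * (H * s ^ μ / s) := by
            gcongr
            · exact hexp s hs
            · exact hh s hs
        _ = t ^ a₀ * H * s ^ (μ - a₀ - 1) := by
            rw [Real.div_rpow ht.le hs0.le, Real.rpow_sub hs0, Real.rpow_sub hs0, Real.rpow_one]
            field_simp
  have hBT : Bd T ≤ H / (a₀ - μ) * t ^ μ := by
    have h1 : Bd T ≤ t ^ a₀ * (H / (a₀ - μ)) * t ^ (μ - a₀) := by
      simp only [hBd]
      have : 0 < a₀ - μ := by linarith
      gcongr
      have : 0 ≤ T ^ (μ - a₀) := by positivity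
      linarith
    refine h1.trans (le_of_eq ?_)
    rw [Real.rpow_sub ht]
    have : 0 < t ^ a₀ := by positivity
    field_simp
  calc ‖y t‖ = ‖f T - (f T - f t)‖ := by rw [← hft]; congr 1; ring
    _ ≤ ‖f T‖ + ‖f T - f t‖ := norm_sub_le _ _
    _ ≤ _ := by linarith

/-- chain rule along a curve -/
lemma aux_chain {w : ℝ → ℂ → ℂ} {c : ℝ → ℂ} {S : Set ℝ} {s δ : ℝ} {A c' : ℂ}
    (hδ : 0 < δ) (hs : s ∈ S)
    (hcont : ContinuousOn (fun p : ℝ × ℂ => w p.1 p.2) (S ×ˢ ball (c s) δ))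
    (hdiff : ∀ t ∈ S, DifferentiableOn ℂ (w t) (ball (c s) δ))
    (hA : HasDerivWithinAt (fun u => w u (c s)) A S s)
    (hc : HasDerivWithinAt c c' S s) :
    HasDerivWithinAt (fun u => w u (c u)) (A + deriv (w s) (c s) * c') S s := by
  have hds : HasDerivAt (w s) (deriv (w s) (c s)) (c s) :=
    ((hdiff s hs).differentiableAt (isOpen_ball.mem_nhds (mem_ball_self hδ))).hasDerivAt
  have h1 : HasDerivWithinAt (fun u => w s (c u)) (deriv (w s) (c s) * c') S s := by
    have := hds.comp_hasDerivWithinAt s hc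
    exact this
  set E : ℝ → ℂ := fun u => (w u (c u) - w s (c u)) - (w u (c s) - w s (c s)) with hE
  have hE0 : HasDerivWithinAt E 0 S s := by
    rw [hasDerivWithinAt_iff_isLittleO]
    have hO := hc.differentiableWithinAt.isBigO_sub
    refine Asymptotics.IsLittleO.trans_isBigO ?_ hO
    rw [Asymptotics.isLittleO_iff]
    intro ε hε
    have hK : ContinuousOn (Function.uncurry w) (S ×ˢ closedBall (c s) ((δ / 4 + δ / 2) / 2)) := by
      refine ContinuousOn.mono hcont (prod_mono_right (closedBall_subset_ball (by linarith)))
    obtain ⟨v, hv, hvw⟩ := (isCompact_closedBall (c s) ((δ / 4 + δ / 2) / 2)).mem_uniformity_of_prod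
      hK hs (dist_mem_uniformity (show 0 < ε * ((δ / 2 - δ / 4) / 2) by
        apply mul_pos hε; linarith))
    have hcc : ∀ᶠ u in 𝓝[S] s, c u ∈ closedBall (c s) (δ / 4) :=
      hc.continuousWithinAt (closedBall_mem_nhds _ (by linarith))
    filter_upwards [hv, hcc, self_mem_nhdsWithin] with u hu hcu huS
    have := aux_lip (f := fun z => w u z - w s z) (c := c s) (r := δ / 4) (R := δ / 2)
      (C := ε * ((δ / 2 - δ / 4) / 2)) (by linarith)
      (((hdiff u huS).sub (hdiff s hs)).mono (ball_subset_ball (by linarith)))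
      (by
        intro z hz
        have := hvw u hu z hz
        simp only [mem_ofPred_eq, dist_eq_norm] at this
        exact this.le) (c u) hcu (c s) (mem_closedBall_self (by linarith))
    have e : ε * ((δ / 2 - δ / 4) / 2) / ((δ / 2 - δ / 4) / 2) = ε := by
      field_simp
    rw [e] at this
    simpa [hE] using this
  have := (hA.add h1).add hE0
  refine ((this.sub_const (w s (c s))).congr_deriv (by ring)).congr_of_eventuallyEq ?_ ?_
  · filter_upwards with u
    simp only [hE, Pi.add_apply]
    ring
  · simp only [hE, Pi.add_apply]
    ring

structure AuxFlow (T R₁ r K : ℝ) (m : ℝ → ℝ) (b P : ℝ → ℂ → ℂ) : Prop where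
  hT : 0 < T
  hK : 0 ≤ K
  hm0 : ∀ s ∈ Ioc 0 T, 0 ≤ m s
  hmono : MonotoneOn m (Ioc 0 T)
  hint : IntegrableOn (fun s => m s / s) (Ioc 0 T)
  hPT : ∀ x ∈ ball (0 : ℂ) R₁, P T x = x
  hPd : ∀ x ∈ ball (0 : ℂ) R₁, ∀ s ∈ Ioc 0 T,
    HasDerivAt (fun u => P u x) (-(b s (P s x)) / (s : ℂ)) s
  hPr : ∀ x ∈ ball (0 : ℂ) R₁, ∀ s ∈ Ioc 0 T, P s x ∈ closedBall (0 : ℂ) r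
  hbc : ContinuousOn (fun p : ℝ × ℂ => b p.1 p.2) (Ioc 0 T ×ˢ closedBall (0 : ℂ) r)
  hbl : ∀ s ∈ Ioc 0 T, ∀ y ∈ closedBall (0 : ℂ) r, ∀ z ∈ closedBall (0 : ℂ) r,
    ‖b s y - b s z‖ ≤ K * m s * ‖y - z‖
  hbd : ∀ s ∈ Ioc 0 T, ∀ y ∈ closedBall (0 : ℂ) r, DifferentiableAt ℂ (b s) y

namespace AuxFlow

variable {T R₁ r K : ℝ} {m : ℝ → ℝ} {b P : ℝ → ℂ → ℂ}

lemma cont (F : AuxFlow T R₁ r K m b P) {x : ℂ} (hx : x ∈ ball (0 : ℂ) R₁) :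
    ContinuousOn (fun u => P u x) (Ioc 0 T) :=
  fun s hs => (F.hPd x hx s hs).continuousAt.continuousWithinAt

lemma inj (F : AuxFlow T R₁ r K m b P) {x x₀ : ℂ} (hx : x ∈ ball (0 : ℂ) R₁)
    (hx₀ : x₀ ∈ ball (0 : ℂ) R₁) {t : ℝ} (ht : t ∈ Ioc 0 T) (h : P t x = P t x₀) : x = x₀ := by
  have hsub : Icc t T ⊆ Ioc 0 T := fun s hs => ⟨ht.1.trans_le hs.1, hs.2⟩
  have hTm : T ∈ Ioc 0 T := ⟨F.hT, le_rfl⟩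
  have hd : ∀ s ∈ Icc t T, HasDerivAt (fun u => P u x - P u x₀)
      (-(b s (P s x)) / (s : ℂ) - -(b s (P s x₀)) / (s : ℂ)) s := fun s hs =>
    (F.hPd x hx s (hsub hs)).sub (F.hPd x₀ hx₀ s (hsub hs))
  have := eq_zero_of_abs_deriv_le_mul_abs_self_of_eq_zero_right (a := t) (b := T)
    (f := fun u => P u x - P u x₀)
    (f' := fun s => -(b s (P s x)) / (s : ℂ) - -(b s (P s x₀)) / (s : ℂ)) (K := K * m T / t)
    (fun s hs => (hd s hs).continuousAt.continuousWithinAt)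
    (fun s hs => (hd s (Ico_subset_Icc_self hs)).hasDerivWithinAt) (by simp [h])
    (by
      intro s hs
      have hs := Ico_subset_Icc_self hs
      have hs' := hsub hs
      have h1 := F.hbl s hs' _ (F.hPr x hx s hs') _ (F.hPr x₀ hx₀ s hs')
      have e : -(b s (P s x)) / (s : ℂ) - -(b s (P s x₀)) / (s : ℂ)
        = -((b s (P s x) - b s (P s x₀)) / (s : ℂ)) := by ring
      rw [e, norm_neg, norm_div, Complex.norm_real, Real.norm_of_nonneg hs'.1.le]
      have hmm : m s ≤ m T := F.hmono hs' hTm hs'.2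
      have h0 := F.hm0 s hs'
      have hK := F.hK
      have ht0 := ht.1
      calc _ ≤ (K * m T * ‖P s x - P s x₀‖) / t := by
            apply div_le_div₀ _ _ ht0 hs.1
            · have := F.hm0 T hTm
              positivity
            · exact h1.trans (by gcongr)
        _ = _ := by ring)
    T (right_mem_Icc.2 ht.2)
  simp only [F.hPT x hx, F.hPT x₀ hx₀] at this
  exact sub_eq_zero.1 this

/-- the difference quotient kernel -/
def Q (b P : ℝ → ℂ → ℂ) (x₀ x : ℂ) (s : ℝ) : ℂ :=
  (b s (P s x) - b s (P s x₀)) / (P s x - P s x₀) / (s : ℂ)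

lemma Q_cont (F : AuxFlow T R₁ r K m b P) {x x₀ : ℂ} (hx : x ∈ ball (0 : ℂ) R₁)
    (hx₀ : x₀ ∈ ball (0 : ℂ) R₁) (hne : x ≠ x₀) : ContinuousOn (Q b P x₀ x) (Ioc 0 T) := by
  have hb : ∀ x ∈ ball (0 : ℂ) R₁, ContinuousOn (fun s => b s (P s x)) (Ioc 0 T) := by
    intro x hx
    exact F.hbc.comp (continuousOn_id.prodMk (F.cont hx)) (fun s hs => ⟨hs, F.hPr x hx s hs⟩)
  unfold Q
  refine (((hb x hx).sub (hb x₀ hx₀)).div ((F.cont hx).sub (F.cont hx₀)) ?_).div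
    Complex.continuous_ofReal.continuousOn ?_
  · intro s hs h
    exact hne (F.inj hx hx₀ hs (sub_eq_zero.1 h))
  · intro s hs
    exact_mod_cast hs.1.ne'

lemma Q_bound (F : AuxFlow T R₁ r K m b P) {x x₀ : ℂ} (hx : x ∈ ball (0 : ℂ) R₁)
    (hx₀ : x₀ ∈ ball (0 : ℂ) R₁) (hne : x ≠ x₀) {s : ℝ} (hs : s ∈ Ioc 0 T) :
    ‖Q b P x₀ x s‖ ≤ K * (m s / s) := by
  have h1 := F.hbl s hs _ (F.hPr x hx s hs) _ (F.hPr x₀ hx₀ s hs)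
  have h2 : 0 < ‖P s x - P s x₀‖ := by
    rw [norm_pos_iff, sub_ne_zero]
    exact fun h => hne (F.inj hx hx₀ hs h)
  unfold Q
  rw [norm_div, norm_div, Complex.norm_real, Real.norm_of_nonneg hs.1.le, ← mul_div_assoc]
  apply div_le_div_of_nonneg_right _ hs.1.le
  rwa [div_le_iff₀ h2]

lemma diff_eq (F : AuxFlow T R₁ r K m b P) {x x₀ : ℂ} (hx : x ∈ ball (0 : ℂ) R₁)
    (hx₀ : x₀ ∈ ball (0 : ℂ) R₁) (hne : x ≠ x₀) {t : ℝ} (ht : t ∈ Ioc 0 T) :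
    P t x - P t x₀ = (x - x₀) * Complex.exp (∫ s in t..T, Q b P x₀ x s) := by
  have hsub : Icc t T ⊆ Ioc 0 T := fun s hs => ⟨ht.1.trans_le hs.1, hs.2⟩
  have := aux_lin_ode (d := fun u => P u x - P u x₀) ht.2 ((F.Q_cont hx hx₀ hne).mono hsub)
    (by
      intro s hs
      have hs' := hsub hs
      have h2 : P s x - P s x₀ ≠ 0 := by
        rw [sub_ne_zero]
        exact fun h => hne (F.inj hx hx₀ hs' h)
      have h3 : (s : ℂ) ≠ 0 := by exact_mod_cast hs'.1.ne'
      refine HasDerivWithinAt.congr_deriv (f := fun u => P u x - P u x₀)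
        ((F.hPd x hx s hs').sub (F.hPd x₀ hx₀ s hs')).hasDerivWithinAt ?_
      unfold Q
      field_simp
      ring)
  simpa only [F.hPT x hx, F.hPT x₀ hx₀] using this

lemma int_mono (F : AuxFlow T R₁ r K m b P) {t : ℝ} (ht : t ∈ Ioc 0 T) :
    IntervalIntegrable (fun s => m s / s) volume t T ∧
    ∫ s in t..T, m s / s ≤ ∫ s in Ioc 0 T, m s / s := by
  constructor
  · rw [intervalIntegrable_iff_integrableOn_Ioc_of_le ht.2]
    exact F.hint.mono_set (Ioc_subset_Ioc_left ht.1.le)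
  · rw [intervalIntegral.integral_of_le ht.2]
    apply setIntegral_mono_set F.hint
    · refine (ae_restrict_iff' measurableSet_Ioc).2 (Eventually.of_forall fun s hs => ?_)
      exact div_nonneg (F.hm0 s hs) hs.1.le
    · exact (Ioc_subset_Ioc_left ht.1.le).eventuallyLE

lemma two_sided (F : AuxFlow T R₁ r K m b P) {x x₀ : ℂ} (hx : x ∈ ball (0 : ℂ) R₁)
    (hx₀ : x₀ ∈ ball (0 : ℂ) R₁) {t : ℝ} (ht : t ∈ Ioc 0 T) :
    ‖P t x - P t x₀‖ ≤ Real.exp (K * ∫ s in Ioc 0 T, m s / s) * ‖x - x₀‖ ∧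
    ‖x - x₀‖ ≤ Real.exp (K * ∫ s in Ioc 0 T, m s / s) * ‖P t x - P t x₀‖ := by
  by_cases hne : x = x₀
  · simp [hne]
  set I := ∫ s in t..T, Q b P x₀ x s with hI
  obtain ⟨h1, h2⟩ := F.int_mono ht
  have hb : ‖I‖ ≤ K * ∫ s in Ioc 0 T, m s / s := by
    calc ‖I‖ ≤ ∫ s in t..T, K * (m s / s) := by
          apply intervalIntegral.norm_integral_le_of_norm_le ht.2 _ (h1.const_mul K)
          refine Eventually.of_forall fun s hs => ?_
          exact F.Q_bound hx hx₀ hne ⟨ht.1.trans hs.1, hs.2⟩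
      _ ≤ _ := by
          rw [intervalIntegral.integral_const_mul]
          exact mul_le_mul_of_nonneg_left h2 F.hK
  have hre := (Complex.abs_re_le_norm I).trans hb
  rw [abs_le] at hre
  rw [F.diff_eq hx hx₀ hne ht, norm_mul, Complex.norm_exp, ← hI]
  constructor
  · rw [mul_comm]
    gcongr
    exact hre.2
  · rw [mul_comm ‖x - x₀‖, ← mul_assoc, ← Real.exp_add]
    apply le_mul_of_one_le_left (norm_nonneg _)
    apply Real.one_le_exp
    linarith

lemma differentiable (F : AuxFlow T R₁ r K m b P) {t : ℝ} (ht : t ∈ Ioc 0 T) :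
    DifferentiableOn ℂ (P t) (ball (0 : ℂ) R₁) := by
  intro x₀ hx₀
  apply DifferentiableAt.differentiableWithinAt
  suffices h : HasDerivAt (P t)
      (Complex.exp (∫ s in t..T, deriv (b s) (P s x₀) / (s : ℂ))) x₀ from h.differentiableAt
  rw [hasDerivAt_iff_tendsto_slope]
  have hev : ∀ᶠ x in 𝓝[≠] x₀, x ∈ ball (0 : ℂ) R₁ ∧ x ≠ x₀ := by
    refine Filter.Eventually.and ?_ self_mem_nhdsWithin
    exact mem_nhdsWithin_of_mem_nhds (isOpen_ball.mem_nhds hx₀)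
  have hlim : Tendsto (fun x => ∫ s in t..T, Q b P x₀ x s) (𝓝[≠] x₀)
      (𝓝 (∫ s in t..T, deriv (b s) (P s x₀) / (s : ℂ))) := by
    apply intervalIntegral.tendsto_integral_filter_of_dominated_convergence
      (fun s => K * (m s / s))
    · filter_upwards [hev] with x hx
      rw [uIoc_of_le ht.2]
      exact ((F.Q_cont hx.1 hx₀ hx.2).mono (Ioc_subset_Ioc_left ht.1.le)).aestronglyMeasurable
        measurableSet_Ioc
    · filter_upwards [hev] with x hx
      refine Eventually.of_forall fun s hs => ?_
      rw [uIoc_of_le ht.2] at hs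
      exact F.Q_bound hx.1 hx₀ hx.2 ⟨ht.1.trans hs.1, hs.2⟩
    · exact (F.int_mono ht).1.const_mul K
    · refine Eventually.of_forall fun s hs => ?_
      rw [uIoc_of_le ht.2] at hs
      have hs' : s ∈ Ioc 0 T := ⟨ht.1.trans hs.1, hs.2⟩
      unfold Q
      refine Tendsto.div_const ?_ _
      have h1 := (F.hbd s hs' _ (F.hPr x₀ hx₀ s hs')).hasDerivAt
      rw [hasDerivAt_iff_tendsto_slope] at h1
      have h2 : Tendsto (fun x => P s x) (𝓝[≠] x₀) (𝓝[≠] (P s x₀)) := by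
        apply tendsto_nhdsWithin_of_tendsto_nhds_of_eventually_within
        · rw [tendsto_iff_norm_sub_tendsto_zero]
          have h3 : Tendsto (fun x => Real.exp (K * ∫ s in Ioc 0 T, m s / s) * ‖x - x₀‖)
              (𝓝[≠] x₀) (𝓝 0) := by
            have : Continuous (fun x => Real.exp (K * ∫ s in Ioc 0 T, m s / s) * ‖x - x₀‖) := by
              fun_prop
            have := this.tendsto x₀
            simp only [sub_self, norm_zero, mul_zero] at this
            exact this.mono_left nhdsWithin_le_nhds
          apply squeeze_zero' (Eventually.of_forall fun _ => norm_nonneg _) _ h3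
          filter_upwards [hev] with x hx
          exact (F.two_sided hx.1 hx₀ hs').1
        · filter_upwards [hev] with x hx
          exact fun h => hx.2 (F.inj hx.1 hx₀ hs' h)
      have h4 := h1.comp h2
      refine h4.congr fun x => ?_
      simp [slope_def_field]
  have := (Complex.continuous_exp.tendsto _).comp hlim
  refine this.congr' ?_
  filter_upwards [hev] with x hx
  rw [slope_def_field, F.diff_eq hx.1 hx₀ hx.2 ht, mul_div_cancel_left₀ _ (sub_ne_zero.2 hx.2)]
  rfl

lemma openness (F : AuxFlow T R₁ r K m b P) {x₀ : ℂ}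
    (hx₀ : x₀ ∈ ball (0 : ℂ) R₁) {s : ℝ} (hs : s ∈ Ioc 0 T) :
    ∃ δ > 0, ∀ t ∈ Ioc 0 T, |t - s| < δ → ∀ y ∈ ball (P s x₀) δ,
      ∃ x ∈ ball (0 : ℂ) R₁, y = P t x := by
  obtain ⟨ρ, hρ, hρs⟩ := Metric.nhds_basis_closedBall.mem_iff.1 (isOpen_ball.mem_nhds hx₀)
  set E := Real.exp (K * ∫ s in Ioc 0 T, m s / s) with hE
  have hE0 : 0 < E := Real.exp_pos _
  have hcov : ∀ t ∈ Ioc 0 T, ball (P t x₀) (ρ / E / 2) ⊆ P t '' closedBall x₀ ρ := by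
    intro t ht
    apply DiffContOnCl.ball_subset_image_closedBall _ hρ
    · intro z hz
      have hzb : z ∈ ball (0 : ℂ) R₁ := hρs (sphere_subset_closedBall hz)
      have := (F.two_sided hzb hx₀ ht).2
      rw [← dist_eq_norm, mem_sphere.1 hz] at this
      rw [div_le_iff₀ hE0]
      linarith
    · apply Filter.Eventually.frequently (f := 𝓝[≠] x₀) _ |>.filter_mono nhdsWithin_le_nhds
      have : ∀ᶠ x in 𝓝[≠] x₀, x ∈ ball (0 : ℂ) R₁ ∧ x ≠ x₀ := by
        refine Filter.Eventually.and ?_ self_mem_nhdsWithin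
        exact mem_nhdsWithin_of_mem_nhds (isOpen_ball.mem_nhds hx₀)
      filter_upwards [this] with x hx h
      exact hx.2 (F.inj hx.1 hx₀ ht h)
    · apply DifferentiableOn.diffContOnCl
      rw [closure_ball _ hρ.ne']
      exact (F.differentiable ht).mono hρs
  have hη : 0 < ρ / E / 4 := by positivity
  have hc := (F.hPd x₀ hx₀ s hs).continuousAt
  obtain ⟨δ, hδ, hδs⟩ := Metric.continuousAt_iff.1 hc _ hη
  refine ⟨min δ (ρ / E / 4), lt_min hδ hη, fun t ht hts y hy => ?_⟩
  have h1 : dist (P t x₀) (P s x₀) < ρ / E / 4 := hδs (by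
    rw [Real.dist_eq]; exact hts.trans_le (min_le_left _ _))
  have h2 : dist y (P s x₀) < ρ / E / 4 := (mem_ball.1 hy).trans_le (min_le_right _ _)
  have h3 : y ∈ ball (P t x₀) (ρ / E / 2) := by
    rw [mem_ball]
    have := dist_triangle_right y (P t x₀) (P s x₀)
    linarith
  obtain ⟨x, hx, hxy⟩ := hcov t ht h3
  exact ⟨x, hρs hx, hxy.symm⟩

end AuxFlow

/-- Corollary 4.3: in the setting of the characteristic domain `𝒟` for
`L = t∂/∂t - λ - b ∂/∂x`, if `0 < a₀ ≤ Re λ` on `𝒟`, `ψ` and `ψ'` are bounded on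
`D_{R₁}`, and `g ∈ X₁(𝒟)` with `max(|g|, |∂g/∂x|) ≤ G t^μ` for some `0 < μ < a₀`,
then the unique solution `w ∈ X₁(𝒟)` of `Lw = g`, `w(T,·) = ψ` satisfies
`max(|w|, |∂w/∂x|) ≤ C t^μ` on `𝒟`; in particular
`|w(t,x)| ≤ M (t/T)^{a₀} + (G/(a₀-μ)) t^μ` when `|ψ| ≤ M` and `|g| ≤ G t^μ`. -/
theorem statement6
    (T₀ R₀ : ℝ) (hT₀ : 0 < T₀) (hR₀ : 0 < R₀)
    (m : ℝ → ℝ) (hm : IsWeight T₀ m)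
    (lam b : ℝ → ℂ → ℂ)
    (hlamX : MemX0 (Set.Icc 0 T₀) R₀ lam) (hbX : MemX0 (Set.Icc 0 T₀) R₀ b)
    (B : ℝ) (hB : 0 < B)
    (hb : ∀ t ∈ Set.Ioc (0:ℝ) T₀, ∀ x ∈ Metric.ball (0:ℂ) R₀, ‖b t x‖ ≤ B * m t)
    (T R R₁ : ℝ) (hT : 0 < T) (hTT₀ : T < T₀)
    (hR : 0 < R) (hRR₁ : R < R₁) (hR₁R₀ : R₁ < R₀)
    (hgap1 : R + B * wphi m T < R₁) (hgap2 : R₁ + B * wphi m T < R₀)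
    -- `Φ t t₀ x₀` is the characteristic `φ(t; t₀, x₀)`, the unique solution of
    -- `dx/dt = -b(t,x)/t`, `x(t₀) = x₀` :
    (Φ : ℝ → ℝ → ℂ → ℂ)
    (hΦinit : ∀ t₀ ∈ Set.Ioc (0:ℝ) T, ∀ x₀ ∈ Metric.ball (0:ℂ) R₁, Φ t₀ t₀ x₀ = x₀)
    (hΦode : ∀ t₀ ∈ Set.Ioc (0:ℝ) T, ∀ x₀ ∈ Metric.ball (0:ℂ) R₁, ∀ t ∈ Set.Ioc (0:ℝ) T,
      Φ t t₀ x₀ ∈ Metric.ball (0:ℂ) R₀ ∧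
      HasDerivAt (fun s => Φ s t₀ x₀) (-(b t (Φ t t₀ x₀)) / (t:ℂ)) t)
    (hΦuniq : ∀ t₀ ∈ Set.Ioc (0:ℝ) T, ∀ x₀ ∈ Metric.ball (0:ℂ) R₁, ∀ y : ℝ → ℂ,
      y t₀ = x₀ →
      (∀ t ∈ Set.Ioc (0:ℝ) T, y t ∈ Metric.ball (0:ℂ) R₀ ∧
        HasDerivAt y (-(b t (y t)) / (t:ℂ)) t) →
      ∀ t ∈ Set.Ioc (0:ℝ) T, y t = Φ t t₀ x₀)
    (a₀ : ℝ) (ha₀ : 0 < a₀)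
    (hrelam : ∀ p ∈ Dchar T R₁ Φ, a₀ ≤ (lam p.1 p.2).re)
    (ψ : ℂ → ℂ) (hψ : DifferentiableOn ℂ ψ (Metric.ball (0:ℂ) R₁))
    (M : ℝ) (hψM : ∀ x ∈ Metric.ball (0:ℂ) R₁, ‖ψ x‖ ≤ M)
    (hψ' : ∃ M' : ℝ, ∀ x ∈ Metric.ball (0:ℂ) R₁, ‖deriv ψ x‖ ≤ M')
    (g : ℝ → ℂ → ℂ) (hgX : MemX1W (Dchar T R₁ Φ) g)
    (G μ : ℝ) (hG : 0 < G) (hμ : 0 < μ) (hμa₀ : μ < a₀)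
    (hg : ∀ p ∈ Dchar T R₁ Φ, max ‖g p.1 p.2‖ ‖deriv (g p.1) p.2‖ ≤ G * p.1 ^ μ) :
    ∀ w : ℝ → ℂ → ℂ, MemX1W (Dchar T R₁ Φ) w → SolvesLW (Dchar T R₁ Φ) lam b g w →
      (∀ x₀ ∈ Metric.ball (0:ℂ) R₁, w T x₀ = ψ x₀) →
      (∃ C > (0:ℝ), ∀ p ∈ Dchar T R₁ Φ,
        max ‖w p.1 p.2‖ ‖deriv (w p.1) p.2‖ ≤ C * p.1 ^ μ) ∧
      (∀ p ∈ Dchar T R₁ Φ,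
        ‖w p.1 p.2‖ ≤ M * (p.1 / T) ^ a₀ + (G / (a₀ - μ)) * p.1 ^ μ) := by
  intro w hwX hwL hwT
  obtain ⟨hmono, hmcont, hmpos, hmint⟩ := hm
  obtain ⟨M', hM'⟩ := hψ'
  set r := R₁ + B * wphi m T with hr
  have hrR : r < R₀ := hgap2
  have hR₁ : 0 < R₁ := hR.trans hRR₁
  have h0R₁ : (0 : ℂ) ∈ ball (0 : ℂ) R₁ := mem_ball_self hR₁
  have hM0 : 0 ≤ M := (norm_nonneg _).trans (hψM 0 h0R₁)
  have hM'0 : 0 ≤ M' := (norm_nonneg _).trans (hM' 0 h0R₁)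
  have hTm : T ∈ Ioc 0 T := ⟨hT, le_rfl⟩
  have hIoc : Ioc 0 T ⊆ Ioc 0 T₀ := Ioc_subset_Ioc_right hTT₀.le
  have hIcc : Ioc 0 T ⊆ Icc 0 T₀ := hIoc.trans Ioc_subset_Icc_self
  have hrball : closedBall (0 : ℂ) r ⊆ ball (0 : ℂ) R₀ := closedBall_subset_ball hrR
  have hmid : closedBall (0 : ℂ) ((r + R₀) / 2) ⊆ ball (0 : ℂ) R₀ :=
    closedBall_subset_ball (by linarith)
  have hmint' : IntegrableOn (fun s => m s / s) (Ioc 0 T) := hmint.mono_set hIoc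
  -- location of the characteristics
  have hPr : ∀ x ∈ ball (0 : ℂ) R₁, ∀ s ∈ Ioc 0 T, Φ s T x ∈ closedBall (0 : ℂ) r := by
    intro x hx s hs
    have hsub : Icc s T ⊆ Ioc 0 T := fun u hu => ⟨hs.1.trans_le hu.1, hu.2⟩
    have hPc : ContinuousOn (fun u => Φ u T x) (Ioc 0 T) := fun u hu =>
      (hΦode T hTm x hx u hu).2.continuousAt.continuousWithinAt
    have hbc : ContinuousOn (fun u => -(b u (Φ u T x)) / (u : ℂ)) (Ioc 0 T) := by
      refine ContinuousOn.div (ContinuousOn.neg ?_) Complex.continuous_ofReal.continuousOn ?_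
      · exact hbX.1.comp (continuousOn_id.prodMk hPc)
          (fun u hu => ⟨hIcc hu, (hΦode T hTm x hx u hu).1⟩)
      · intro u hu
        exact_mod_cast hu.1.ne'
    have hftc : ∫ u in s..T, -(b u (Φ u T x)) / (u : ℂ) = Φ T T x - Φ s T x := by
      apply intervalIntegral.integral_eq_sub_of_hasDerivAt (f := fun u => Φ u T x)
      · intro u hu
        rw [uIcc_of_le hs.2] at hu
        exact (hΦode T hTm x hx u (hsub hu)).2
      · apply ContinuousOn.intervalIntegrable
        rw [uIcc_of_le hs.2]
        exact hbc.mono hsub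
    have hi : IntervalIntegrable (fun s => m s / s) volume s T := by
      rw [intervalIntegrable_iff_integrableOn_Ioc_of_le hs.2]
      exact hmint'.mono_set (Ioc_subset_Ioc_left hs.1.le)
    have hle : ‖∫ u in s..T, -(b u (Φ u T x)) / (u : ℂ)‖ ≤ B * wphi m T := by
      calc _ ≤ ∫ u in s..T, B * (m u / u) := by
            apply intervalIntegral.norm_integral_le_of_norm_le hs.2 _ (hi.const_mul B)
            refine Eventually.of_forall fun u hu => ?_
            have hu' := hsub (Ioc_subset_Icc_self hu)
            rw [norm_div, norm_neg, Complex.norm_real, Real.norm_of_nonneg hu'.1.le,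
              ← mul_div_assoc]
            exact div_le_div_of_nonneg_right
              (hb u (hIoc hu') _ (hΦode T hTm x hx u hu').1) hu'.1.le
        _ ≤ B * wphi m T := by
            rw [intervalIntegral.integral_const_mul]
            refine mul_le_mul_of_nonneg_left ?_ hB.le
            rw [intervalIntegral.integral_of_le hs.2]
            apply setIntegral_mono_set hmint'
            · refine (ae_restrict_iff' measurableSet_Ioc).2 (Eventually.of_forall fun s hs => ?_)
              exact div_nonneg (hmpos s (hIoc hs)).le hs.1.le
            · exact (Ioc_subset_Ioc_left hs.1.le).eventuallyLE
    rw [hftc, hΦinit T hTm x hx] at hle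
    rw [mem_closedBall_zero_iff]
    have hx' := mem_ball_zero_iff.1 hx
    have := norm_sub_norm_le (Φ s T x) x
    rw [norm_sub_rev] at this
    linarith
  set K := B / ((R₀ - r) / 2) with hK
  have F : AuxFlow T R₁ r K m b (fun s x => Φ s T x) := by
    refine ⟨hT, ?_, fun s hs => (hmpos s (hIoc hs)).le, hmono.mono hIoc, hmint',
      fun x hx => hΦinit T hTm x hx, fun x hx s hs => (hΦode T hTm x hx s hs).2, hPr, ?_, ?_, ?_⟩
    · have : 0 < R₀ - r := by linarith
      positivity
    · exact hbX.1.mono (prod_mono hIcc hrball)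
    · intro s hs y hy z hz
      have := aux_lip hrR (hbX.2 s (hIcc hs)) (fun z hz => hb s (hIoc hs) z (hmid hz)) y hy z hz
      refine this.trans (le_of_eq ?_)
      rw [hK]
      ring
    · intro s hs y hy
      exact (hbX.2 s (hIcc hs)).differentiableAt (isOpen_ball.mem_nhds (hrball hy))
  set E := Real.exp (K * ∫ s in Ioc 0 T, m s / s) with hE
  have hE0 : 0 < E := Real.exp_pos _
  have hD : ∀ x ∈ ball (0 : ℂ) R₁, ∀ s ∈ Ioc 0 T, (s, Φ s T x) ∈ Dchar T R₁ Φ :=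
    fun x hx s hs => ⟨hs, x, hx, rfl⟩
  have hslice : ∀ x ∈ ball (0 : ℂ) R₁, ∀ s ∈ Ioc 0 T,
      ∀ᶠ y in 𝓝 (Φ s T x), (s, y) ∈ Dchar T R₁ Φ := by
    intro x hx s hs
    obtain ⟨δ, hδ, h⟩ := F.openness hx hs
    filter_upwards [ball_mem_nhds _ hδ] with y hy
    exact ⟨hs, h s hs (by simpa using hδ) y hy⟩
  -- the equation along characteristics
  have hchar : ∀ x ∈ ball (0 : ℂ) R₁, ∀ s ∈ Ioc 0 T,
      HasDerivWithinAt (fun u => w u (Φ u T x))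
        ((lam s (Φ s T x) * w s (Φ s T x) + g s (Φ s T x)) / (s : ℂ)) (Ioc 0 T) s := by
    intro x hx s hs
    obtain ⟨δ, hδ, h⟩ := F.openness hx hs
    set S := Ioc 0 T ∩ ball s δ with hS
    have hSn : S ∈ 𝓝[Ioc 0 T] s := inter_mem_nhdsWithin _ (ball_mem_nhds _ hδ)
    have hsS : s ∈ S := ⟨hs, mem_ball_self hδ⟩
    have hSD : ∀ t ∈ S, ∀ y ∈ ball (Φ s T x) δ, (t, y) ∈ Dchar T R₁ Φ := by
      intro t ht y hy
      exact ⟨ht.1, h t ht.1 (by have := ht.2; rwa [mem_ball, Real.dist_eq] at this) y hy⟩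
    have := aux_chain (w := w) (c := fun u => Φ u T x) (S := S) hδ hsS
      (hwX.1.1.mono (fun p hp => hSD p.1 hp.1 p.2 hp.2))
      (fun t ht => (hwX.1.2 t).mono (fun y hy => hSD t ht y hy))
      ((hwL s _ (hD x hx s hs) hs.1).mono
        (fun t ht => hSD t ht _ (mem_ball_self hδ)))
      (hΦode T hTm x hx s hs).2.hasDerivWithinAt
    refine (this.congr_deriv ?_).mono_of_mem_nhdsWithin hSn
    ring
  have hlamc : ∀ x ∈ ball (0 : ℂ) R₁, ContinuousOn (fun u => lam u (Φ u T x)) (Ioc 0 T) := by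
    intro x hx
    exact hlamX.1.comp (continuousOn_id.prodMk (F.cont hx))
      (fun u hu => ⟨hIcc hu, hrball (hPr x hx u hu)⟩)
  -- the pointwise estimate
  have hest : ∀ x ∈ ball (0 : ℂ) R₁, ∀ t ∈ Ioc 0 T,
      ‖w t (Φ t T x)‖ ≤ M * (t / T) ^ a₀ + G / (a₀ - μ) * t ^ μ := by
    intro x hx t ht
    have hsub : Icc t T ⊆ Ioc 0 T := fun u hu => ⟨ht.1.trans_le hu.1, hu.2⟩
    refine aux_est (y := fun u => w u (Φ u T x)) (l := fun u => lam u (Φ u T x))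
      (h := fun u => g u (Φ u T x)) ht.1 ht.2 hμa₀ hG.le ((hlamc x hx).mono hsub) ?_ ?_ ?_ ?_
    · intro s hs
      exact hrelam _ (hD x hx s (hsub hs))
    · intro s hs
      exact (le_max_left _ _).trans (hg _ (hD x hx s (hsub hs)))
    · intro s hs
      exact (hchar x hx s (hsub hs)).mono hsub
    · simp only [hΦinit T hTm x hx, hwT x hx]
      exact hψM x hx
  have hpow : ∀ t ∈ Ioc 0 T, (t / T) ^ a₀ ≤ T ^ (-μ) * t ^ μ := by
    intro t ht
    have ht0 := ht.1
    calc (t / T) ^ a₀ ≤ (t / T) ^ μ :=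
          Real.rpow_le_rpow_of_exponent_ge (by positivity) ((div_le_one hT).2 ht.2) hμa₀.le
      _ = _ := by
          rw [Real.div_rpow ht0.le hT.le, Real.rpow_neg hT.le]
          ring
  have haμ : 0 < a₀ - μ := by linarith
  set C₁ := M * T ^ (-μ) + G / (a₀ - μ) with hC₁
  have hC₁0 : 0 ≤ C₁ := by positivity
  have hw1 : ∀ x ∈ ball (0 : ℂ) R₁, ∀ t ∈ Ioc 0 T, ‖w t (Φ t T x)‖ ≤ C₁ * t ^ μ := by
    intro x hx t ht
    have h1 := mul_le_mul_of_nonneg_left (hpow t ht) hM0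
    have h2 := hest x hx t ht
    rw [hC₁]
    linarith
  -- Lipschitz bound for lam
  obtain ⟨Λ₀, hΛ₀⟩ := ((isCompact_Icc (a := (0 : ℝ)) (b := T)).prod
    (isCompact_closedBall (0 : ℂ) ((r + R₀) / 2))).exists_bound_of_continuousOn
    (hlamX.1.mono (prod_mono (Icc_subset_Icc_right hTT₀.le) hmid))
  have hr0 : 0 ≤ r := (norm_nonneg _).trans (mem_closedBall_zero_iff.1 (hPr 0 h0R₁ T hTm))
  have hΛ₀0 : 0 ≤ Λ₀ := (norm_nonneg _).trans (hΛ₀ (0, 0)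
    ⟨left_mem_Icc.2 hT.le, mem_closedBall_self (by linarith)⟩)
  set Λ := Λ₀ / ((R₀ - r) / 2) with hΛ
  have hΛ0 : 0 ≤ Λ := div_nonneg hΛ₀0 (by linarith)
  have hlamlip : ∀ s ∈ Ioc 0 T, ∀ y ∈ closedBall (0 : ℂ) r, ∀ z ∈ closedBall (0 : ℂ) r,
      ‖lam s y - lam s z‖ ≤ Λ * ‖y - z‖ := by
    intro s hs
    exact aux_lip hrR (hlamX.2 s (hIcc hs)) (fun z hz => hΛ₀ (s, z) ⟨Ioc_subset_Icc_self hs, hz⟩)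
  -- Lipschitz bound for g along the flow
  have hglip : ∀ s ∈ Ioc 0 T, ∀ x ∈ ball (0 : ℂ) R₁, ∀ x₀ ∈ ball (0 : ℂ) R₁,
      ‖g s (Φ s T x) - g s (Φ s T x₀)‖ ≤ G * s ^ μ * E * ‖x - x₀‖ := by
    intro s hs x hx x₀ hx₀
    refine Convex.norm_image_sub_le_of_norm_hasDerivWithin_le (𝕜 := ℂ)
      (f := fun x => g s (Φ s T x)) (s := ball (0 : ℂ) R₁)
      (f' := fun x => deriv (g s) (Φ s T x) * deriv (fun z => Φ s T z) x)
      ?_ ?_ (convex_ball _ _) hx₀ hx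
    · intro z hz
      have h1 : HasDerivAt (fun z => Φ s T z) (deriv (fun z => Φ s T z) z) z :=
        ((F.differentiable hs).differentiableAt (isOpen_ball.mem_nhds hz)).hasDerivAt
      have h2 : HasDerivAt (g s) (deriv (g s) (Φ s T z)) (Φ s T z) :=
        ((hgX.1.2 s).differentiableAt (hslice z hz s hs)).hasDerivAt
      exact (h2.comp z h1).hasDerivWithinAt
    · intro z hz
      rw [norm_mul]
      have h1 : ‖deriv (g s) (Φ s T z)‖ ≤ G * s ^ μ :=
        (le_max_right _ _).trans (hg _ (hD z hz s hs))
      have h2 : ‖deriv (fun z => Φ s T z) z‖ ≤ E := by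
        apply norm_deriv_le_of_lip' hE0.le
        filter_upwards [isOpen_ball.mem_nhds hz] with z' hz'
        exact (F.two_sided hz' hz hs).1
      exact mul_le_mul h1 h2 (norm_nonneg _) ((norm_nonneg _).trans h1)
  -- Lipschitz bound for w along the flow
  set H₂ := Λ * E * C₁ + G * E with hH₂
  have hH₂0 : 0 ≤ H₂ := by positivity
  set C₂ := M' * T ^ (-μ) + H₂ / (a₀ - μ) with hC₂
  have hC₂0 : 0 ≤ C₂ := by positivity
  have hwlip : ∀ t ∈ Ioc 0 T, ∀ x ∈ ball (0 : ℂ) R₁, ∀ x₀ ∈ ball (0 : ℂ) R₁,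
      ‖w t (Φ t T x) - w t (Φ t T x₀)‖ ≤ C₂ * t ^ μ * ‖x - x₀‖ := by
    intro t ht x hx x₀ hx₀
    have hsub : Icc t T ⊆ Ioc 0 T := fun u hu => ⟨ht.1.trans_le hu.1, hu.2⟩
    have key := aux_est (y := fun u => w u (Φ u T x) - w u (Φ u T x₀))
      (l := fun u => lam u (Φ u T x))
      (h := fun u => (lam u (Φ u T x) - lam u (Φ u T x₀)) * w u (Φ u T x₀)
        + (g u (Φ u T x) - g u (Φ u T x₀)))
      (H := H₂ * ‖x - x₀‖) (M := M' * ‖x - x₀‖) (μ := μ) (a₀ := a₀)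
      ht.1 ht.2 hμa₀ (by positivity) ((hlamc x hx).mono hsub) ?_ ?_ ?_ ?_
    · have h1 := mul_le_mul_of_nonneg_left (hpow t ht) (mul_nonneg hM'0 (norm_nonneg (x - x₀)))
      refine key.trans ((add_le_add_left h1 _).trans (le_of_eq ?_))
      rw [hC₂]
      ring
    · intro s hs
      exact hrelam _ (hD x hx s (hsub hs))
    · intro s hs
      have hs' := hsub hs
      have hs0 : 0 ≤ s ^ μ := Real.rpow_nonneg hs'.1.le _
      have h1 : ‖lam s (Φ s T x) - lam s (Φ s T x₀)‖ ≤ Λ * (E * ‖x - x₀‖) :=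
        (hlamlip s hs' _ (hPr x hx s hs') _ (hPr x₀ hx₀ s hs')).trans
          (mul_le_mul_of_nonneg_left (F.two_sided hx hx₀ hs').1 hΛ0)
      have h2 := hw1 x₀ hx₀ s hs'
      have h3 := hglip s hs' x hx x₀ hx₀
      calc _ ≤ ‖lam s (Φ s T x) - lam s (Φ s T x₀)‖ * ‖w s (Φ s T x₀)‖
            + ‖g s (Φ s T x) - g s (Φ s T x₀)‖ := by
            rw [← norm_mul]; exact norm_add_le _ _
        _ ≤ Λ * (E * ‖x - x₀‖) * (C₁ * s ^ μ) + G * s ^ μ * E * ‖x - x₀‖ :=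
            add_le_add (mul_le_mul h1 h2 (norm_nonneg _) (by positivity)) h3
        _ = _ := by rw [hH₂]; ring
    · intro s hs
      have h1 := ((hchar x hx s (hsub hs)).sub (hchar x₀ hx₀ s (hsub hs))).mono hsub
      refine HasDerivWithinAt.congr_deriv
        (f := fun u => w u (Φ u T x) - w u (Φ u T x₀)) h1 ?_
      ring
    · simp only [hΦinit T hTm x hx, hwT x hx, hΦinit T hTm x₀ hx₀, hwT x₀ hx₀]
      exact Convex.norm_image_sub_le_of_norm_deriv_le (𝕜 := ℂ)
        (fun z hz => hψ.differentiableAt (isOpen_ball.mem_nhds hz)) hM' (convex_ball _ _) hx₀ hx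
  have hderiv : ∀ t ∈ Ioc 0 T, ∀ x ∈ ball (0 : ℂ) R₁,
      ‖deriv (w t) (Φ t T x)‖ ≤ C₂ * E * t ^ μ := by
    intro t ht x₀ hx₀
    have ht0 : 0 ≤ t ^ μ := Real.rpow_nonneg ht.1.le _
    apply norm_deriv_le_of_lip' (by positivity)
    filter_upwards [hslice x₀ hx₀ t ht] with y hy
    obtain ⟨_, x, hx, hxy⟩ := hy
    simp only at hxy
    rw [hxy]
    calc _ ≤ C₂ * t ^ μ * ‖x - x₀‖ := hwlip t ht x hx x₀ hx₀
      _ ≤ C₂ * t ^ μ * (E * ‖Φ t T x - Φ t T x₀‖) :=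
          mul_le_mul_of_nonneg_left (F.two_sided hx hx₀ ht).2 (by positivity)
      _ = _ := by ring
  constructor
  · refine ⟨C₁ + C₂ * E + 1, by positivity, ?_⟩
    rintro ⟨t, y⟩ ⟨ht, x, hx, hxy⟩
    simp only at ht hxy ⊢
    rw [hxy]
    have ht0 : 0 ≤ t ^ μ := Real.rpow_nonneg ht.1.le _
    have h1 := hw1 x hx t ht
    have h2 := hderiv t ht x hx
    have h3 : 0 ≤ C₁ * t ^ μ := by positivity
    have h4 : 0 ≤ C₂ * E * t ^ μ := by positivity
    apply max_le <;> nlinarith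
  · rintro ⟨t, y⟩ ⟨ht, x, hx, hxy⟩
    simp only at ht hxy ⊢
    rw [hxy]
    exact hest x hx t ht
end
end

section
/- Let b ∈ X₀([0,T₀]×D_{R₀}) satisfy |b(t,x)| ≤ B·m(t) on [0,T₀]×D_{R₀} for a weight function m and B > 0; set φ(t) = ∫₀^t m(τ)/τ dτ, take 0 < T < T₀, 0 < R < R₀, 0 < r ≤ 1/B, and W = {(t,x) ∈ [0,T]×D_R : φ(t)/r + |x| < R}. Let φ(t;t₀,x₀) be the unique solution of dx/dt = −b(t,x)/t with x(t₀) = x₀. Then: for every (t₀,x₀) ∈ W, the characteristic curve satisfies (t, φ(t;t₀,x₀)) ∈ W for all 0 ≤ t ≤ t₀ (in particular φ(t;t₀,x₀) extends to [0,t₀]), and moreover φ(t)/r + |φ(t;t₀,x₀)| ≤ φ(t₀)/r + |x₀| < R for 0 ≤ t ≤ t₀. -/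
open Set Filter MeasureTheory Metric Topology Complex

noncomputable section

/-- radial retraction onto the closed disc of radius `R`. -/
def clampC (R : ℝ) (x : ℂ) : ℂ := (R / max R ‖x‖ : ℝ) • x

lemma clampC_of_le {R : ℝ} (hR : 0 < R) {x : ℂ} (hx : ‖x‖ ≤ R) : clampC R x = x := by
  unfold clampC
  rw [max_eq_left hx, div_self hR.ne', one_smul]

lemma norm_clampC_le {R : ℝ} (hR : 0 < R) (x : ℂ) : ‖clampC R x‖ ≤ R := by
  unfold clampC
  have h : 0 < max R ‖x‖ := lt_max_of_lt_left hR
  rw [norm_smul, Real.norm_of_nonneg (by positivity), div_mul_eq_mul_div, div_le_iff₀ h]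
  exact mul_le_mul_of_nonneg_left (le_max_right _ _) hR.le

lemma clampC_lip {R : ℝ} (hR : 0 < R) : LipschitzWith 2 (clampC R) := by
  apply LipschitzWith.of_dist_le_mul
  intro x y
  rw [dist_eq_norm, dist_eq_norm]
  unfold clampC
  have ha : 0 < max R ‖x‖ := lt_max_of_lt_left hR
  have hb : 0 < max R ‖y‖ := lt_max_of_lt_left hR
  have ha1 : R ≤ max R ‖x‖ := le_max_left _ _
  have hb1 : ‖y‖ ≤ max R ‖y‖ := le_max_right _ _
  have hab : |max R ‖y‖ - max R ‖x‖| ≤ ‖x - y‖ := by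
    have h1 := abs_max_sub_max_le_abs ‖y‖ ‖x‖ R
    rw [max_comm R, max_comm R]
    refine h1.trans ?_
    rw [norm_sub_rev]
    exact abs_norm_sub_norm_le y x
  generalize max R ‖x‖ = a at *
  generalize max R ‖y‖ = b at *
  have e : (R / a : ℝ) • x - (R / b : ℝ) • y = (R / a : ℝ) • (x - y) + (R * (b - a) / (a * b) : ℝ) • y := by
    have : (R * (b - a) / (a * b) : ℝ) = R / a - R / b := by field_simp
    rw [this, smul_sub, sub_smul]; abel
  rw [e]
  refine (norm_add_le _ _).trans ?_
  rw [norm_smul, norm_smul, Real.norm_of_nonneg (by positivity : 0 ≤ R / a), Real.norm_eq_abs,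
    abs_div, abs_mul, abs_of_pos hR, abs_of_pos (mul_pos ha hb)]
  have h1 : R / a * ‖x - y‖ ≤ 1 * ‖x - y‖ := by
    gcongr
    exact (div_le_one ha).2 ha1
  have h2 : R * |b - a| / (a * b) * ‖y‖ ≤ ‖x - y‖ := by
    have : R * |b - a| / (a * b) * ‖y‖ = (R / a) * (‖y‖ / b) * |b - a| := by field_simp
    rw [this]
    calc (R / a) * (‖y‖ / b) * |b - a| ≤ 1 * 1 * |b - a| := by
          gcongr
          · exact (div_le_one ha).2 ha1
          · exact (div_le_one hb).2 hb1
      _ ≤ ‖x - y‖ := by simpa using hab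
  simp only [NNReal.coe_ofNat]
  linarith

lemma wphi_continuousOn {T₀ : ℝ} {m : ℝ → ℝ} (hm : IsWeight T₀ m) :
    ContinuousOn (wphi m) (Icc 0 T₀) :=
  intervalIntegral.continuousOn_primitive ((integrableOn_Icc_iff_integrableOn_Ioc (by simp)).2 hm.2.2.2)

lemma wphi_nonneg {T₀ : ℝ} {m : ℝ → ℝ} (hm : IsWeight T₀ m) {t : ℝ} (ht : t ≤ T₀) :
    0 ≤ wphi m t := by
  apply setIntegral_nonneg measurableSet_Ioc
  intro s hs
  exact div_nonneg (hm.2.2.1 s ⟨hs.1, hs.2.trans ht⟩).le hs.1.le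

lemma wphi_hasDerivAt {T₀ : ℝ} {m : ℝ → ℝ} (hm : IsWeight T₀ m) {t : ℝ} (ht : t ∈ Ioo 0 T₀) :
    HasDerivAt (wphi m) (m t / t) t := by
  have hc : ContinuousOn (fun τ => m τ / τ) (Ioo 0 T₀) :=
    (hm.2.1.mono Ioo_subset_Ioc_self).div continuousOn_id (fun x hx => hx.1.ne')
  have hnh : Ioo 0 T₀ ∈ 𝓝 t := isOpen_Ioo.mem_nhds ht
  have h := intervalIntegral.integral_hasDerivAt_right (f := fun τ => m τ / τ) (a := 0) (b := t)
    (by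
      rw [intervalIntegrable_iff_integrableOn_Ioc_of_le ht.1.le]
      exact hm.2.2.2.mono_set (Ioc_subset_Ioc_right ht.2.le))
    (hc.stronglyMeasurableAtFilter isOpen_Ioo t ht) (hc.continuousAt hnh)
  refine h.congr_of_eventuallyEq ?_
  filter_upwards [hnh] with s hs
  rw [intervalIntegral.integral_of_le hs.1.le]; rfl

/-- the basic growth estimate. -/
lemma growth {T₀ : ℝ} {m : ℝ → ℝ} (hm : IsWeight T₀ m) {r s t : ℝ} (hs : 0 < s) (hst : s ≤ t)
    (ht : t < T₀) {y y' : ℝ → ℂ} (hy : ∀ u ∈ Icc s t, HasDerivAt y (y' u) u)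
    (hb : ∀ u ∈ Icc s t, ‖y' u‖ ≤ m u / u / r) :
    ‖y t - y s‖ ≤ (wphi m t - wphi m s) / r := by
  have hd : ∀ u ∈ Icc s t, HasDerivAt (fun u => (wphi m u - wphi m s) / r) (m u / u / r) u :=
    fun u hu => ((wphi_hasDerivAt hm ⟨hs.trans_le hu.1, hu.2.trans_lt ht⟩).sub_const _).div_const _
  exact image_norm_le_of_norm_deriv_right_le_deriv_boundary' (f := fun u => y u - y s) (f' := y')
    (B := fun u => (wphi m u - wphi m s) / r) (B' := fun u => m u / u / r) (a := s) (b := t)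
    (fun u hu => ((hy u hu).continuousAt.continuousWithinAt).sub continuousWithinAt_const)
    (fun u hu => ((hy u (Ico_subset_Icc_self hu)).sub_const _).hasDerivWithinAt)
    (by simp)
    (fun u hu => (hd u hu).continuousAt.continuousWithinAt)
    (fun u hu => (hd u (Ico_subset_Icc_self hu)).hasDerivWithinAt)
    (fun u hu => hb u (Ico_subset_Icc_self hu)) ⟨hst, le_rfl⟩

/-- the truncated vector field -/
def vC (b : ℝ → ℂ → ℂ) (R : ℝ) (t : ℝ) (x : ℂ) : ℂ := -(b t (clampC R x)) / (t : ℂ)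

lemma vC_lip {T₀ R₀ R B : ℝ} {m : ℝ → ℝ} (hm : IsWeight T₀ m) {b : ℝ → ℂ → ℂ}
    (hbX : MemX0 (Set.Icc 0 T₀) R₀ b) (hB : 0 < B)
    (hb : ∀ t ∈ Set.Ioc (0:ℝ) T₀, ∀ x ∈ Metric.ball (0:ℂ) R₀, ‖b t x‖ ≤ B * m t)
    (hR : 0 < R) (hRR₀ : R < R₀) {ε : ℝ} (hε : 0 < ε) :
    ∃ K : NNReal, ∀ t ∈ Icc ε T₀, LipschitzWith K (vC b R t) := by
  rcases le_or_gt ε T₀ with hεT | hεT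
  swap
  · exact ⟨0, fun t ht => absurd (ht.1.trans ht.2) (not_le.2 hεT)⟩
  have hT₀ : 0 < T₀ := hε.trans_le hεT
  have hmT := hm.2.2.1 T₀ ⟨hT₀, le_rfl⟩
  set ρ := (R₀ - R) / 2 with hρ
  have hρ0 : 0 < ρ := by rw [hρ]; linarith
  set C : ℝ := B * m T₀ / ρ with hC
  have hC0 : 0 ≤ C := by positivity
  have key : ∀ t ∈ Icc ε T₀, LipschitzOnWith C.toNNReal (b t) (closedBall 0 R) := by
    intro t ht
    have ht0 : 0 < t := hε.trans_le ht.1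
    have hd := hbX.2 t ⟨ht0.le, ht.2⟩
    refine Convex.lipschitzOnWith_of_nnnorm_deriv_le (𝕜 := ℂ) (fun x hx => ?_) (fun x hx => ?_)
      (convex_closedBall 0 R)
    · exact hd.differentiableAt (isOpen_ball.mem_nhds (closedBall_subset_ball hRR₀ hx))
    · have hsub : closedBall x ρ ⊆ ball 0 R₀ := by
        intro w hw
        rw [mem_closedBall] at hx hw
        rw [mem_ball]
        have := dist_triangle w x 0
        rw [hρ] at hw
        linarith
      have h1 := Complex.norm_deriv_le_of_forall_mem_sphere_norm_le (f := b t) (c := x)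
        (C := B * m T₀) hρ0
        ((hd.mono hsub).diffContOnCl_ball (Subset.refl _)) (fun w hw => by
          refine (hb t ⟨ht0, ht.2⟩ w (hsub (sphere_subset_closedBall hw))).trans ?_
          gcongr
          exact hm.1 ⟨ht0, ht.2⟩ ⟨hT₀, le_rfl⟩ ht.2)
      rw [← NNReal.coe_le_coe, Real.coe_toNNReal _ hC0]
      exact h1
  refine ⟨(2 * C / ε).toNNReal, fun t ht => LipschitzWith.of_dist_le_mul fun x y => ?_⟩
  have ht0 : 0 < t := hε.trans_le ht.1
  have h1 := (key t ht).dist_le_mul (clampC R x) (by simpa using norm_clampC_le hR x)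
    (clampC R y) (by simpa using norm_clampC_le hR y)
  have h2 := (clampC_lip hR).dist_le_mul x y
  rw [Real.coe_toNNReal _ hC0] at h1
  rw [Real.coe_toNNReal _ (by positivity)]
  have e : dist (vC b R t x) (vC b R t y) = dist (b t (clampC R x)) (b t (clampC R y)) / t := by
    unfold vC
    rw [dist_eq_norm, dist_eq_norm, ← sub_div, norm_div, Complex.norm_real,
      Real.norm_of_nonneg ht0.le, neg_sub_neg, norm_sub_rev]
  rw [e]
  calc _ ≤ C * (2 * dist x y) / ε := by
        gcongr
        · exact h1.trans (by gcongr; exact_mod_cast h2)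
        · exact ht.1
    _ = _ := by ring

lemma vC_bound {T₀ R₀ R B : ℝ} {m : ℝ → ℝ} {b : ℝ → ℂ → ℂ}
    (hb : ∀ t ∈ Set.Ioc (0:ℝ) T₀, ∀ x ∈ Metric.ball (0:ℂ) R₀, ‖b t x‖ ≤ B * m t)
    (hR : 0 < R) (hRR₀ : R < R₀) {t : ℝ} (ht : t ∈ Ioc 0 T₀) (x : ℂ) :
    ‖vC b R t x‖ ≤ B * m t / t := by
  unfold vC
  have h := hb t ht (clampC R x) (by simpa using (norm_clampC_le hR x).trans_lt hRR₀)
  rw [norm_div, norm_neg, Complex.norm_real, Real.norm_of_nonneg ht.1.le]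
  have := ht.1
  gcongr

lemma vC_exists {T₀ R₀ R B : ℝ} {m : ℝ → ℝ} (hm : IsWeight T₀ m) {b : ℝ → ℂ → ℂ}
    (hbX : MemX0 (Set.Icc 0 T₀) R₀ b) (hB : 0 < B)
    (hb : ∀ t ∈ Set.Ioc (0:ℝ) T₀, ∀ x ∈ Metric.ball (0:ℂ) R₀, ‖b t x‖ ≤ B * m t)
    (hR : 0 < R) (hRR₀ : R < R₀) {ε t₀ : ℝ} (hε : 0 < ε) (h1 : ε < t₀) (h2 : t₀ < T₀) (x₀ : ℂ) :
    ∃ z : ℝ → ℂ, z t₀ = x₀ ∧ ContinuousOn z (Icc ε T₀) ∧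
      ∀ t ∈ Ioo ε T₀, HasDerivAt z (vC b R t (z t)) t := by
  obtain ⟨K, hK⟩ := vC_lip hm hbX hB hb hR hRR₀ hε
  have hT₀ : 0 < T₀ := by linarith
  have hmT := hm.2.2.1 T₀ ⟨hT₀, le_rfl⟩
  set L : ℝ := B * m T₀ / ε with hL
  have hL0 : 0 ≤ L := by positivity
  have hP : IsPicardLindelof (vC b R) (tmin := ε) (tmax := T₀) ⟨t₀, h1.le, h2.le⟩ x₀
      (L * T₀).toNNReal 0 L.toNNReal K := by
    refine ⟨fun t ht => (hK t ht).lipschitzOnWith, fun x _ => ?_, fun t ht x _ => ?_, ?_⟩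
    · unfold vC
      refine ContinuousOn.div (ContinuousOn.neg ?_) (by fun_prop) ?_
      · refine hbX.1.comp (f := fun t : ℝ => (t, clampC R x)) (by fun_prop) ?_
        intro t ht
        exact ⟨⟨hε.le.trans ht.1, ht.2⟩, by simpa using (norm_clampC_le hR x).trans_lt hRR₀⟩
      · intro t ht
        exact_mod_cast (hε.trans_le ht.1).ne'
    · have ht0 : 0 < t := hε.trans_le ht.1
      rw [Real.coe_toNNReal _ hL0]
      refine (vC_bound hb hR hRR₀ ⟨ht0, ht.2⟩ x).trans ?_
      have := hm.1 ⟨ht0, ht.2⟩ ⟨hT₀, le_rfl⟩ ht.2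
      have := ht.1
      rw [hL]
      gcongr
    · rw [Real.coe_toNNReal _ hL0, Real.coe_toNNReal _ (by positivity)]
      simp only [NNReal.coe_zero, sub_zero]
      gcongr
      apply max_le <;> linarith
  obtain ⟨z, hz, hz'⟩ := hP.exists_eq_forall_mem_Icc_hasDerivWithinAt₀
  exact ⟨z, hz, fun t ht => (hz' t ht).continuousWithinAt,
    fun t ht => (hz' t (Ioo_subset_Icc_self ht)).hasDerivAt (Icc_mem_nhds ht.1 ht.2)⟩

/-- Lemma 6.1.1 (1): for `(t₀,x₀) ∈ W`, every characteristic through `(t₀,x₀)`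
(i.e. solution of `dx/dt = -b(t,x)/t`, `x(t₀) = x₀`) stays in `W` for `0 ≤ t ≤ t₀`,
with `φ(t)/r + |x(t)| ≤ φ(t₀)/r + |x₀| < R`; in particular it extends to `[0,t₀]`. -/
theorem statement9
    (T₀ R₀ : ℝ) (hT₀ : 0 < T₀) (hR₀ : 0 < R₀)
    (m : ℝ → ℝ) (hm : IsWeight T₀ m)
    (b : ℝ → ℂ → ℂ) (hbX : MemX0 (Set.Icc 0 T₀) R₀ b)
    (B : ℝ) (hB : 0 < B)
    (hb : ∀ t ∈ Set.Ioc (0:ℝ) T₀, ∀ x ∈ Metric.ball (0:ℂ) R₀, ‖b t x‖ ≤ B * m t)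
    (T R r : ℝ) (hT : 0 < T) (hTT₀ : T < T₀) (hR : 0 < R) (hRR₀ : R < R₀)
    (hr : 0 < r) (hrB : r ≤ 1 / B)
    :
    ∀ t₀ : ℝ, ∀ x₀ : ℂ, (t₀, x₀) ∈ Wset m T R r → 0 < t₀ →
      -- (a priori estimate) any partial solution on `(t₁, t₀]` stays in `W` :
      (∀ t₁ ∈ Set.Ico (0:ℝ) t₀, ∀ y : ℝ → ℂ, y t₀ = x₀ →
        (∀ t ∈ Set.Ioc t₁ t₀, y t ∈ Metric.ball (0:ℂ) R₀ ∧
          HasDerivAt y (-(b t (y t)) / (t:ℂ)) t) →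
        ∀ t ∈ Set.Ioc t₁ t₀,
          wphi m t / r + ‖y t‖ ≤ wphi m t₀ / r + ‖x₀‖ ∧ (t, y t) ∈ Wset m T R r) ∧
      -- and the characteristic exists on all of `[0, t₀]`, staying in `W` :
      (∃ z : ℝ → ℂ, ContinuousOn z (Set.Icc 0 t₀) ∧ z t₀ = x₀ ∧
        (∀ t ∈ Set.Ioc (0:ℝ) t₀, HasDerivAt z (-(b t (z t)) / (t:ℂ)) t) ∧
        (∀ t ∈ Set.Icc (0:ℝ) t₀,
          wphi m t / r + ‖z t‖ ≤ wphi m t₀ / r + ‖x₀‖ ∧ (t, z t) ∈ Wset m T R r) ∧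
        -- `z` is the unique such solution :
        (∀ y : ℝ → ℂ, ContinuousOn y (Set.Icc 0 t₀) → y t₀ = x₀ →
          (∀ t ∈ Set.Ioc (0:ℝ) t₀, y t ∈ Metric.ball (0:ℂ) R₀ ∧
            HasDerivAt y (-(b t (y t)) / (t:ℂ)) t) →
          ∀ t ∈ Set.Icc (0:ℝ) t₀, y t = z t)) := by
  intro t₀ x₀ hW ht₀
  obtain ⟨⟨-, ht₀T⟩, -, hWR⟩ := hW
  simp only at ht₀T hWR
  have ht₀T₀ : t₀ < T₀ := ht₀T.trans_lt hTT₀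
  have hBr : B ≤ 1 / r := by
    rw [le_div_iff₀ hr]
    rw [le_div_iff₀ hB] at hrB
    linarith
  have hBm : ∀ u, 0 < u → u < T₀ → B * m u / u ≤ m u / u / r := by
    intro u hu hu'
    have := (hm.2.2.1 u ⟨hu, hu'.le⟩).le
    calc B * m u / u ≤ (1 / r) * m u / u := by gcongr
      _ = m u / u / r := by ring
  have toW : ∀ t ∈ Icc 0 t₀, ∀ x : ℂ, wphi m t / r + ‖x‖ ≤ wphi m t₀ / r + ‖x₀‖ →
      wphi m t / r + ‖x‖ ≤ wphi m t₀ / r + ‖x₀‖ ∧ (t, x) ∈ Wset m T R r := by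
    intro t ht x h
    have h0 : 0 ≤ wphi m t / r := div_nonneg (wphi_nonneg hm (ht.2.trans ht₀T₀.le)) hr.le
    refine ⟨h, ⟨ht.1, ht.2.trans ht₀T⟩, ?_, ?_⟩
    · rw [mem_ball_zero_iff]; simp only; linarith
    · simp only; linarith
  have apriori : ∀ s ∈ Ioc 0 t₀, ∀ y y' : ℝ → ℂ, y t₀ = x₀ →
      (∀ u ∈ Icc s t₀, HasDerivAt y (y' u) u) → (∀ u ∈ Icc s t₀, ‖y' u‖ ≤ B * m u / u) →
      wphi m s / r + ‖y s‖ ≤ wphi m t₀ / r + ‖x₀‖ ∧ (s, y s) ∈ Wset m T R r := by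
    intro s hs y y' hy0 hy hy'
    apply toW s ⟨hs.1.le, hs.2⟩
    have h := growth hm hs.1 hs.2 ht₀T₀ hy (fun u hu => (hy' u hu).trans
      (hBm u (hs.1.trans_le hu.1) (hu.2.trans_lt ht₀T₀)))
    have h2 : ‖y s‖ ≤ ‖y t₀‖ + ‖y t₀ - y s‖ := by
      have := norm_sub_le (y t₀) (y t₀ - y s)
      simpa using this
    rw [hy0] at h2 h
    rw [sub_div] at h
    linarith
  have part1 : ∀ t₁ ∈ Set.Ico (0:ℝ) t₀, ∀ y : ℝ → ℂ, y t₀ = x₀ →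
        (∀ t ∈ Set.Ioc t₁ t₀, y t ∈ Metric.ball (0:ℂ) R₀ ∧
          HasDerivAt y (-(b t (y t)) / (t:ℂ)) t) →
        ∀ t ∈ Set.Ioc t₁ t₀,
          wphi m t / r + ‖y t‖ ≤ wphi m t₀ / r + ‖x₀‖ ∧ (t, y t) ∈ Wset m T R r := by
    intro t₁ ht₁ y hy0 hy t ht
    refine apriori t ⟨ht₁.1.trans_lt ht.1, ht.2⟩ y (fun u => -(b u (y u)) / (u:ℂ)) hy0
      (fun u hu => (hy u ⟨ht.1.trans_le hu.1, hu.2⟩).2) (fun u hu => ?_)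
    have hu0 : 0 < u := (ht₁.1.trans_lt ht.1).trans_le hu.1
    have h := hb u ⟨hu0, hu.2.trans ht₀T₀.le⟩ _ (hy u ⟨ht.1.trans_le hu.1, hu.2⟩).1
    rw [norm_div, norm_neg, Complex.norm_real, Real.norm_of_nonneg hu0.le]
    gcongr
  refine ⟨part1, ?_⟩
  -- truncated solutions
  have hex : ∀ ε : ℝ, ∃ z : ℝ → ℂ, 0 < ε → ε < t₀ → (z t₀ = x₀ ∧ ContinuousOn z (Icc ε T₀) ∧
      ∀ t ∈ Ioo ε T₀, HasDerivAt z (vC b R t (z t)) t) := by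
    intro ε
    by_cases h : 0 < ε ∧ ε < t₀
    · obtain ⟨z, hz⟩ := vC_exists hm hbX hB hb hR hRR₀ h.1 h.2 ht₀T₀ x₀
      exact ⟨z, fun _ _ => hz⟩
    · exact ⟨0, fun h1 h2 => absurd ⟨h1, h2⟩ h⟩
  choose Z hZ using hex
  have agree : ∀ ε δ : ℝ, 0 < ε → ε ≤ δ → δ < t₀ → EqOn (Z ε) (Z δ) (Icc δ T₀) := by
    intro ε δ hε hεδ hδ
    obtain ⟨K, hK⟩ := vC_lip hm hbX hB hb hR hRR₀ (hε.trans_le hεδ)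
    obtain ⟨a1, a2, a3⟩ := hZ ε hε (hεδ.trans_lt hδ)
    obtain ⟨b1, b2, b3⟩ := hZ δ (hε.trans_le hεδ) hδ
    exact ODE_solution_unique_of_mem_Icc (v := vC b R) (s := fun _ => univ) (K := K) (t₀ := t₀)
      (fun t ht => (hK t (Ioo_subset_Icc_self ht)).lipschitzOnWith) ⟨hδ, ht₀T₀⟩
      (a2.mono (Icc_subset_Icc_left hεδ)) (fun t ht => a3 t ⟨hεδ.trans_lt ht.1, ht.2⟩)
      (fun _ _ => mem_univ _) b2 b3 (fun _ _ => mem_univ _) (a1.trans b1.symm)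
  set w : ℝ → ℂ := fun t => Z (min t t₀ / 2) t with hw
  have wZ : ∀ a ∈ Ioo 0 t₀, ∀ s ∈ Ioo a T₀, w s = Z (a / 2) s := by
    intro a ha s hs
    have h1 : a ≤ min s t₀ := le_min hs.1.le ha.2.le
    have h2 : min s t₀ ≤ s := min_le_left _ _
    have h3 : min s t₀ ≤ t₀ := min_le_right _ _
    have ha0 := ha.1
    exact (agree (a / 2) (min s t₀ / 2) (by linarith) (by linarith) (by linarith)
      ⟨by linarith, hs.2.le⟩).symm
  have wt₀ : w t₀ = x₀ := by
    simp only [hw, min_self]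
    exact (hZ _ (by linarith) (by linarith)).1
  have wd : ∀ t ∈ Ioc 0 t₀, HasDerivAt w (vC b R t (w t)) t := by
    intro t ht
    have ht0 := ht.1
    have ha : t / 2 ∈ Ioo 0 t₀ := ⟨by linarith, by linarith [ht.2]⟩
    have htm : t ∈ Ioo (t / 2) T₀ := ⟨by linarith, ht.2.trans_lt ht₀T₀⟩
    have h := (hZ (t / 2 / 2) (by linarith) (by linarith [ha.2])).2.2 t
      ⟨by linarith, ht.2.trans_lt ht₀T₀⟩
    rw [wZ _ ha t htm]
    refine h.congr_of_eventuallyEq ?_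
    filter_upwards [isOpen_Ioo.mem_nhds htm] with s hs
    exact wZ _ ha s hs
  have west : ∀ t ∈ Ioc 0 t₀,
      wphi m t / r + ‖w t‖ ≤ wphi m t₀ / r + ‖x₀‖ ∧ (t, w t) ∈ Wset m T R r := by
    intro t ht
    exact apriori t ht w (fun u => vC b R u (w u)) wt₀
      (fun u hu => wd u ⟨ht.1.trans_le hu.1, hu.2⟩)
      (fun u hu => vC_bound hb hR hRR₀ ⟨ht.1.trans_le hu.1, hu.2.trans ht₀T₀.le⟩ _)
  have wd' : ∀ t ∈ Ioc 0 t₀, HasDerivAt w (-(b t (w t)) / (t:ℂ)) t := by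
    intro t ht
    have h := wd t ht
    have hn : ‖w t‖ ≤ R := (mem_ball_zero_iff.1 (west t ht).2.2.1).le
    unfold vC at h
    rwa [clampC_of_le hR hn] at h
  have hφ0 : Tendsto (wphi m) (𝓝[>] 0) (𝓝 (wphi m 0)) := by
    have h := (wphi_continuousOn hm) 0 ⟨le_rfl, hT₀.le⟩
    refine h.mono_left ?_
    rw [← nhdsWithin_Ioc_eq_nhdsGT hT₀]
    exact nhdsWithin_mono _ Ioc_subset_Icc_self
  have hmem0 : Ioc 0 t₀ ∈ 𝓝[>] (0:ℝ) := Ioc_mem_nhdsGT ht₀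
  have hlim : ∃ l, Tendsto w (𝓝[>] 0) (𝓝 l) := by
    apply cauchy_map_iff_exists_tendsto.1
    have hc : Cauchy (map (wphi m) (𝓝[>] (0:ℝ))) := hφ0.cauchy_map
    rw [Metric.cauchy_iff] at hc ⊢
    refine ⟨inferInstance, fun ε hε => ?_⟩
    obtain ⟨S, hS, hS'⟩ := hc.2 (ε * r) (by positivity)
    refine ⟨w '' (wphi m ⁻¹' S ∩ Ioc 0 t₀), image_mem_map (inter_mem hS hmem0), ?_⟩
    have main : ∀ s ∈ wphi m ⁻¹' S ∩ Ioc 0 t₀, ∀ t ∈ wphi m ⁻¹' S ∩ Ioc 0 t₀, s ≤ t →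
        dist (w t) (w s) < ε := by
      intro s hs t ht hst
      have h := growth hm (r := r) hs.2.1 hst (ht.2.2.trans_lt ht₀T₀)
        (fun u hu => wd u ⟨hs.2.1.trans_le hu.1, hu.2.trans ht.2.2⟩)
        (fun u hu => (vC_bound hb hR hRR₀ ⟨hs.2.1.trans_le hu.1,
          (hu.2.trans ht.2.2).trans ht₀T₀.le⟩ _).trans
          (hBm u (hs.2.1.trans_le hu.1) ((hu.2.trans ht.2.2).trans_lt ht₀T₀)))
      rw [dist_eq_norm]
      refine h.trans_lt ?_
      rw [div_lt_iff₀ hr]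
      have h2 := hS' _ ht.1 _ hs.1
      rw [Real.dist_eq] at h2
      exact (le_abs_self _).trans_lt h2
    rintro _ ⟨s, hs, rfl⟩ _ ⟨t, ht, rfl⟩
    rcases le_total s t with h | h
    · rw [dist_comm]; exact main s hs t ht h
    · exact main t ht s hs h
  obtain ⟨l, hl⟩ := hlim
  set z : ℝ → ℂ := Function.update w 0 l with hz
  have zw : ∀ t, 0 < t → z t = w t := fun t ht => Function.update_of_ne ht.ne' _ _
  have z0 : z 0 = l := Function.update_self _ _ _
  have zd : ∀ t ∈ Ioc 0 t₀, HasDerivAt z (-(b t (z t)) / (t:ℂ)) t := by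
    intro t ht
    rw [zw t ht.1]
    refine (wd' t ht).congr_of_eventuallyEq ?_
    filter_upwards [isOpen_Ioi.mem_nhds ht.1] with s hs
    exact zw s hs
  have zc : ContinuousOn z (Icc 0 t₀) := by
    intro t ht
    rcases ht.1.eq_or_lt with h | h
    · subst h
      rw [hz, continuousWithinAt_update_same]
      refine hl.mono_left (nhdsWithin_mono _ ?_)
      intro s hs
      exact lt_of_le_of_ne hs.1.1 (fun h => hs.2 h.symm)
    · exact (zd t ⟨h, ht.2⟩).continuousAt.continuousWithinAt
  have zest : ∀ t ∈ Set.Icc (0:ℝ) t₀,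
      wphi m t / r + ‖z t‖ ≤ wphi m t₀ / r + ‖x₀‖ ∧ (t, z t) ∈ Wset m T R r := by
    intro t ht
    rcases ht.1.eq_or_lt with h | h
    · subst h
      apply toW 0 ht
      rw [z0]
      refine le_of_tendsto ((hφ0.div_const r).add hl.norm) ?_
      filter_upwards [hmem0] with s hs
      exact (west s hs).1
    · rw [zw t h]
      exact west t ⟨h, ht.2⟩
  refine ⟨z, zc, (zw t₀ ht₀).trans wt₀, zd, zest, ?_⟩
  intro y yc hy0 hy
  have yest := part1 0 ⟨le_rfl, ht₀⟩ y hy0 hy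
  have pos : ∀ t ∈ Ioc 0 t₀, y t = z t := by
    intro t ht
    obtain ⟨K, hK⟩ := vC_lip hm hbX hB hb hR hRR₀ ht.1
    have tr : ∀ f : ℝ → ℂ, (∀ u ∈ Ioc 0 t₀, HasDerivAt f (-(b u (f u)) / (u:ℂ)) u) →
        (∀ u ∈ Ioc 0 t₀, (u, f u) ∈ Wset m T R r) →
        ∀ u ∈ Ioc t t₀, HasDerivWithinAt f (vC b R u (f u)) (Iic u) u := by
      intro f hf hfW u hu
      have hu' : u ∈ Ioc 0 t₀ := ⟨ht.1.trans hu.1, hu.2⟩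
      have hn : ‖f u‖ ≤ R := (mem_ball_zero_iff.1 (hfW u hu').2.1).le
      unfold vC
      rw [clampC_of_le hR hn]
      exact (hf u hu').hasDerivWithinAt
    exact ODE_solution_unique_of_mem_Icc_left (v := vC b R) (s := fun _ => univ) (K := K)
      (a := t) (b := t₀)
      (fun u hu => (hK u ⟨hu.1.le, hu.2.trans ht₀T₀.le⟩).lipschitzOnWith)
      (yc.mono (Icc_subset_Icc_left ht.1.le))
      (tr y (fun u hu => (hy u hu).2) (fun u hu => (yest u hu).2)) (fun _ _ => mem_univ _)
      (zc.mono (Icc_subset_Icc_left ht.1.le))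
      (tr z zd (fun u hu => (zest u ⟨hu.1.le, hu.2⟩).2)) (fun _ _ => mem_univ _)
      (hy0.trans ((zw t₀ ht₀).trans wt₀).symm) ⟨le_rfl, ht.2⟩
  intro t ht
  rcases ht.1.eq_or_lt with h | h
  · subst h
    have hle : 𝓝[>] (0:ℝ) ≤ 𝓝[Icc 0 t₀] 0 := by
      rw [← nhdsWithin_Ioc_eq_nhdsGT ht₀]
      exact nhdsWithin_mono _ Ioc_subset_Icc_self
    refine tendsto_nhds_unique_of_eventuallyEq ((yc 0 ht).mono_left hle)
      ((zc 0 ht).mono_left hle) ?_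
    filter_upwards [hmem0] with s hs
    exact pos s hs
  · exact pos t ⟨h, ht.2⟩
end
end
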